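/- There exists a universal constant C > 0 such that the following holds. Let n ∈ ℕ, let 0 < p ≤ 1/2 with pn ∈ ℤ, let k ∈ ℕ, and let f : S(n,p) → {0,1} satisfy ‖f^{>k}‖₂² ≤ ε for some ε ≤ p^{Ck}. Then there exists a function g : S(n,p) → {0,1} of degree ≤ k (i.e. g ∈ L_k) such that Pr_x[f(x) ≠ g(x)] ≤ 2ε, where x is uniform on S(n,p). -/

import Mathlib

open Finset
open scoped Classical

/-- A point of the slice `S(n,p)`: a Boolean vector whose number of ones equals `p * n`. -/
abbrev SlicePoint (n : ℕ) (p : ℝ) : Type :=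
  {x : Fin n → Bool // ((Finset.univ.filter (fun i => x i = true)).card : ℝ) = p * n}

variable {n : ℕ} {p : ℝ}

/-- Expectation with respect to the uniform measure on the slice. -/
noncomputable def sExp (f : SlicePoint n p → ℝ) : ℝ :=
  (∑ x : SlicePoint n p, f x) / (Fintype.card (SlicePoint n p) : ℝ)

/-- The inner product `⟨f,g⟩ = E_x [f x * g x]` on functions on the slice. -/
noncomputable def sInner (f g : SlicePoint n p → ℝ) : ℝ :=
  sExp (fun x => f x * g x)

/-- `‖f‖₂² = E_x [f x ^ 2]`. -/
noncomputable def sNormSq (f : SlicePoint n p → ℝ) : ℝ := sInner f f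

/-- `‖f‖₂`. -/
noncomputable def sNorm (f : SlicePoint n p → ℝ) : ℝ := Real.sqrt (sNormSq f)

/-- The `i`-th coordinate of a slice point, viewed as a real number in `{0,1}`. -/
def coordR (x : SlicePoint n p) (i : Fin n) : ℝ := if x.1 i then 1 else 0

/-- `AND_T (x) = ∏_{i ∈ T} x_i`. -/
def andT (T : Finset (Fin n)) : SlicePoint n p → ℝ := fun x => ∏ i ∈ T, coordR x i

/-- The space `L_k` of functions of degree at most `k` on the slice. -/
def degLE (n : ℕ) (p : ℝ) (k : ℕ) : Submodule ℝ (SlicePoint n p → ℝ) :=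
  Submodule.span ℝ {g | ∃ T : Finset (Fin n), T.card ≤ k ∧ g = andT T}

/-- The space `L_{k-1}` (i.e. spanned by `AND_T` with `|T| < k`). -/
def degLT (n : ℕ) (p : ℝ) (k : ℕ) : Submodule ℝ (SlicePoint n p → ℝ) :=
  Submodule.span ℝ {g | ∃ T : Finset (Fin n), T.card < k ∧ g = andT T}

/-- `fk` is the orthogonal projection `f^{≤ k}` of `f` onto `L_k`. -/
def IsLowProj (n : ℕ) (p : ℝ) (k : ℕ) (f fk : SlicePoint n p → ℝ) : Prop :=
  fk ∈ degLE n p k ∧ ∀ g ∈ degLE n p k, sInner (f - fk) g = 0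

/-- `fk` is the orthogonal projection of `f` onto the span of `AND_T`, `|T| < k`. -/
def IsLowProjLT (n : ℕ) (p : ℝ) (k : ℕ) (f fk : SlicePoint n p → ℝ) : Prop :=
  fk ∈ degLT n p k ∧ ∀ g ∈ degLT n p k, sInner (f - fk) g = 0

/-- `Pr_x [f x ≠ g x]` under the uniform measure on the slice. -/
noncomputable def probNe (f g : SlicePoint n p → ℝ) : ℝ :=
  sExp (fun x => if f x = g x then 0 else 1)

/-- The action of a permutation on a slice point: `(x^π)_{π i} = x_i`. -/
def permPt (π : Equiv.Perm (Fin n)) (x : SlicePoint n p) : SlicePoint n p :=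
  ⟨fun i => x.1 (π.symm i), by
    have h : (Finset.univ.filter (fun i => x.1 (π.symm i) = true)) =
        (Finset.univ.filter (fun i => x.1 i = true)).map π.toEmbedding := by
      ext i
      simp [Finset.mem_map_equiv]
    rw [h, Finset.card_map]
    exact x.2⟩

/-- The derivative operator `D_{ij} f = (f - f^{(ij)})/2`. -/
noncomputable def Dij (i j : Fin n) (f : SlicePoint n p → ℝ) : SlicePoint n p → ℝ :=
  fun x => (f x - f (permPt (Equiv.swap i j) x)) / 2

/-- The derivative operator `D_P` associated with a set `P` of pairs,
obtained by composing the `D_{ab}` for `(a,b) ∈ P` (these commute for tuples). -/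
noncomputable def DP (P : Finset (Fin n × Fin n)) (f : SlicePoint n p → ℝ) :
    SlicePoint n p → ℝ :=
  P.toList.foldr (fun q g => Dij q.1 q.2 g) f

/-- `P` is a `k`-tuple: `k` pairs `(a,b)` with `a < b`, all `2k` entries distinct. -/
def IsTuple {n : ℕ} (k : ℕ) (P : Finset (Fin n × Fin n)) : Prop :=
  P.card = k ∧ (∀ q ∈ P, q.1 < q.2) ∧
    ∀ q ∈ P, ∀ r ∈ P, q ≠ r →
      q.1 ≠ r.1 ∧ q.1 ≠ r.2 ∧ q.2 ≠ r.1 ∧ q.2 ≠ r.2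

/-- `P` is shifted: for every pair `(a,b) ∈ P`, every `a' ≤ a` occurs as an entry of `P`. -/
def IsShifted {n : ℕ} (P : Finset (Fin n × Fin n)) : Prop :=
  ∀ q ∈ P, ∀ a : Fin n, a ≤ q.1 → ∃ r ∈ P, r.1 = a ∨ r.2 = a

/-- `P` is sorted: `a_i < a_j ↔ b_i < b_j`. -/
def IsSorted {n : ℕ} (P : Finset (Fin n × Fin n)) : Prop :=
  ∀ q ∈ P, ∀ r ∈ P, (q.1 < r.1 ↔ q.2 < r.2)

/-- `Ψ_P (x) = ∏_{(a,b) ∈ P} (x_b - x_a)`. -/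
def PsiP (P : Finset (Fin n × Fin n)) : SlicePoint n p → ℝ :=
  fun x => ∏ q ∈ P, (coordR x q.2 - coordR x q.1)

/-- The slice Laplacian `L f = f - (1 / C(n,2)) ∑_{i<j} f^{(ij)}`. -/
noncomputable def sliceLap (f : SlicePoint n p → ℝ) : SlicePoint n p → ℝ :=
  fun x => f x -
    (∑ q ∈ Finset.univ.filter (fun q : Fin n × Fin n => q.1 < q.2),
      f (permPt (Equiv.swap q.1 q.2) x)) / (n.choose 2 : ℝ)

/-- The noise operator `H_t = exp (-t L) = ∑_l (-t)^l L^l / l!`. -/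
noncomputable def Ht (t : ℝ) (f : SlicePoint n p → ℝ) : SlicePoint n p → ℝ :=
  fun x => ∑' l : ℕ, ((-t) ^ l / (l.factorial : ℝ)) * (sliceLap^[l] f) x

/-- The averaging operator `E_I f (x) = E_{Q ∼ S_I} [f (x^Q)]`, averaging over a uniformly
random permutation of the coordinates in `I` (fixing the coordinates outside `I`). -/
noncomputable def avgI (I : Finset (Fin n)) (f : SlicePoint n p → ℝ) : SlicePoint n p → ℝ :=
  fun x => (∑ σ : {σ : Equiv.Perm (Fin n) // ∀ i ∉ I, σ i = i}, f (permPt σ.1 x)) /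
    (Fintype.card {σ : Equiv.Perm (Fin n) // ∀ i ∉ I, σ i = i} : ℝ)

/-- The conditional variance `V_I (f) = ‖f - E_I f‖₂²`. -/
noncomputable def condVar (I : Finset (Fin n)) (f : SlicePoint n p → ℝ) : ℝ :=
  sNormSq (f - avgI I f)

/-- Expectation with respect to the uniform measure on the discrete cube. -/
noncomputable def cExp {n : ℕ} (f : (Fin n → Bool) → ℝ) : ℝ :=
  (∑ x : Fin n → Bool, f x) / (2 ^ n : ℝ)

/-- The Fourier–Walsh coefficient `f̂ (S) = E_x [f x * χ_S x]`. -/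
noncomputable def walshCoeff {n : ℕ} (f : (Fin n → Bool) → ℝ) (S : Finset (Fin n)) : ℝ :=
  cExp (fun x => f x * ∏ i ∈ S, (if x i then (-1 : ℝ) else 1))

/-- The Fourier weight of `f` beyond degree `k`: `W^{>k} (f) = ∑_{|S| > k} f̂(S)²`. -/
noncomputable def WAbove {n : ℕ} (k : ℕ) (f : (Fin n → Bool) → ℝ) : ℝ :=
  ∑ S ∈ Finset.univ.filter (fun S : Finset (Fin n) => k < S.card), walshCoeff f S ^ 2

/-- `Pr_x [f x ≠ g x]` under the uniform measure on the cube. -/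
noncomputable def cProbNe {n : ℕ} (f g : (Fin n → Bool) → ℝ) : ℝ :=
  cExp (fun x => if f x = g x then 0 else 1)

/-- The action of a permutation on a point of the cube: `(x^π)_{π i} = x_i`. -/
def cPerm {n : ℕ} (π : Equiv.Perm (Fin n)) (x : Fin n → Bool) : Fin n → Bool :=
  fun i => x (π.symm i)

/-- The derivative operator on the cube. -/
noncomputable def cDij {n : ℕ} (i j : Fin n) (f : (Fin n → Bool) → ℝ) :
    (Fin n → Bool) → ℝ :=
  fun x => (f x - f (cPerm (Equiv.swap i j) x)) / 2

namespace KS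
variable {ι : Type*} [DecidableEq ι]

/-- sum over the slice of `r`-subsets of `U` -/
noncomputable def Sm (U : Finset ι) (r : ℕ) (f : Finset ι → ℝ) : ℝ :=
  ∑ s ∈ powersetCard r U, f s

/-- two-point log-Sobolev: scalar inequality -/
lemma scalar_ineq (u K : ℝ) (hu : 0 ≤ u) (hK : 4 ≤ K) (hK2 : 4 + 2 * Real.log u ≤ K) :
    u ^ 2 * Real.log (u ^ 2) ≤ (u ^ 2 - 1) + K * (u - 1) ^ 2 := by
  rcases hu.eq_or_lt with rfl | hu
  · simp; linarith
  rw [Real.log_pow]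
  have hl := Real.log_le_sub_one_of_pos hu
  push_cast
  rcases le_total u 1 with h | h
  · have h1 : u ^ 2 * (2 * Real.log u) ≤ u ^ 2 * (2 * (u - 1)) := by gcongr
    have h2 : 4 * (u - 1) ^ 2 ≤ K * (u - 1) ^ 2 := by gcongr
    nlinarith [mul_nonneg (sub_nonneg.2 h) (mul_nonneg (sub_nonneg.2 h) (by linarith : 0 ≤ 3 - 2 * u))]
  · have h2 : (4 + 2 * Real.log u) * (u - 1) ^ 2 ≤ K * (u - 1) ^ 2 := by gcongr
    have h1 : (2 * Real.log u) * (2 * u - 1) ≤ (2 * (u - 1)) * (2 * u - 1) := by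
      apply mul_le_mul_of_nonneg_right _ (by linarith); linarith
    nlinarith [mul_nonneg (sub_nonneg.2 h) (sub_nonneg.2 h)]

lemma two_point (w v a b K : ℝ) (hw : 0 < w) (hv : 0 < v) (hwv : w + v = 1) (ha : 0 ≤ a)
    (hb : 0 ≤ b) (hK : 4 + Real.log (1 / w) + Real.log (1 / v) ≤ K) :
    w * a ^ 2 * Real.log (a ^ 2) + v * b ^ 2 * Real.log (b ^ 2)
      - (w * a ^ 2 + v * b ^ 2) * Real.log (w * a ^ 2 + v * b ^ 2)
      ≤ 2 * K * (w * v * (a - b) ^ 2) := by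
  have hlw : 0 ≤ Real.log (1 / w) := Real.log_nonneg (by rw [le_div_iff₀ hw]; linarith)
  have hlv : 0 ≤ Real.log (1 / v) := Real.log_nonneg (by rw [le_div_iff₀ hv]; linarith)
  have hK4 : 4 ≤ K := by linarith
  set μ := w * a ^ 2 + v * b ^ 2 with hμ
  have hμ0 : 0 ≤ μ := by positivity
  rcases hμ0.eq_or_lt with h0 | hpos
  · have h1 : w * a ^ 2 = 0 := by nlinarith [mul_nonneg hw.le (sq_nonneg a), mul_nonneg hv.le (sq_nonneg b)]
    have h2 : v * b ^ 2 = 0 := by nlinarith [mul_nonneg hw.le (sq_nonneg a), mul_nonneg hv.le (sq_nonneg b)]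
    rw [h1, h2, ← h0]; simp; positivity
  set σ := Real.sqrt μ with hσ
  have hσ2 : σ ^ 2 = μ := Real.sq_sqrt hμ0
  have hσpos : 0 < σ := Real.sqrt_pos.2 hpos
  -- generic scaled bound
  have key : ∀ c : ℝ, 0 ≤ c → ∀ y : ℝ, 0 < y → y * c ^ 2 ≤ μ → 4 + Real.log (1 / y) ≤ K →
      c ^ 2 * Real.log (c ^ 2) ≤ c ^ 2 * Real.log μ + (c ^ 2 - μ) + K * (c - σ) ^ 2 := by
    intro c hc y hy hyc hKy
    have hle : 4 + 2 * Real.log (c / σ) ≤ K := by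
      rcases hc.eq_or_lt with rfl | hc
      · simp; linarith
      have : 2 * Real.log (c / σ) = Real.log ((c / σ) ^ 2) := by rw [Real.log_pow]; push_cast; ring
      rw [this]
      have : Real.log ((c / σ) ^ 2) ≤ Real.log (1 / y) := by
        apply Real.log_le_log (by positivity)
        rw [div_pow, hσ2, div_le_div_iff₀ hpos hy]; linarith
      linarith
    have h := scalar_ineq (c / σ) K (by positivity) hK4 hle
    have h' := mul_le_mul_of_nonneg_left h hμ0
    have e1 : μ * ((c / σ) ^ 2 * Real.log ((c / σ) ^ 2)) = c ^ 2 * Real.log (c ^ 2) - c ^ 2 * Real.log μ := by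
      rcases hc.eq_or_lt with rfl | hc
      · simp
      rw [div_pow, hσ2, Real.log_div (by positivity) hpos.ne']
      field_simp
    have e2 : μ * ((c / σ) ^ 2 - 1 + K * (c / σ - 1) ^ 2) = (c ^ 2 - μ) + K * (c - σ) ^ 2 := by
      rw [← hσ2]; field_simp
    linarith
  have k1 := key a ha w hw (by nlinarith [mul_nonneg hv.le (sq_nonneg b)]) (by linarith)
  have k2 := key b hb v hv (by nlinarith [mul_nonneg hw.le (sq_nonneg a)]) (by linarith)
  have k1' := mul_le_mul_of_nonneg_left k1 hw.le
  have k2' := mul_le_mul_of_nonneg_left k2 hv.le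
  have hmean : w * a + v * b ≤ σ := by
    apply Real.le_sqrt_of_sq_le
    have : v = 1 - w := by linarith
    rw [hμ, this]
    nlinarith [mul_nonneg (mul_nonneg hw.le hv.le) (sq_nonneg (a - b))]
  have hm0 : 0 ≤ w * a + v * b := by positivity
  have hfin : w * (a - σ) ^ 2 + v * (b - σ) ^ 2 ≤ 2 * (w * v * (a - b) ^ 2) := by
    have e : w * (a - σ) ^ 2 + v * (b - σ) ^ 2 = μ - 2 * σ * (w * a + v * b) + σ ^ 2 := by
      have : v = 1 - w := by linarith
      rw [hμ, this]; ring
    have e2 : w * v * (a - b) ^ 2 = μ - (w * a + v * b) ^ 2 := by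
      have : v = 1 - w := by linarith
      rw [hμ, this]; ring
    rw [e, e2, hσ2]
    nlinarith
  have hfin' := mul_le_mul_of_nonneg_left hfin (by linarith : 0 ≤ K)
  have e3 : w * μ + v * μ = μ := by rw [← add_mul, hwv, one_mul]
  have e4 : w * (a ^ 2 * Real.log μ) + v * (b ^ 2 * Real.log μ) = μ * Real.log μ := by rw [hμ]; ring
  nlinarith

lemma bracket (X Y N1 N0 K : ℝ) (hX : 0 ≤ X) (hY : 0 ≤ Y) (h1 : 0 < N1) (h0 : 0 < N0)
    (hK : 4 + Real.log ((N1 + N0) / N1) + Real.log ((N1 + N0) / N0) ≤ K) :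
    X * Real.log (X / N1) + Y * Real.log (Y / N0) - (X + Y) * Real.log ((X + Y) / (N1 + N0))
      ≤ 2 * K * (X * (N0 / (N1 + N0)) + Y * (N1 / (N1 + N0))
          - 2 * Real.sqrt (X * (N0 / (N1 + N0)) * (Y * (N1 / (N1 + N0))))) := by
  have hN : 0 < N1 + N0 := by positivity
  set N := N1 + N0 with hNdef
  have hwv : N1 / N + N0 / N = 1 := by rw [← add_div]; exact div_self hN.ne'
  have ha : Real.sqrt (X / N1) ^ 2 = X / N1 := Real.sq_sqrt (by positivity)
  have hb : Real.sqrt (Y / N0) ^ 2 = Y / N0 := Real.sq_sqrt (by positivity)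
  have h := two_point (N1 / N) (N0 / N) (Real.sqrt (X / N1)) (Real.sqrt (Y / N0)) K (by positivity)
    (by positivity) hwv (Real.sqrt_nonneg _) (Real.sqrt_nonneg _) (by rw [one_div_div, one_div_div]; exact hK)
  rw [sub_sq, ha, hb] at h
  have e1 : N1 / N * (X / N1) + N0 / N * (Y / N0) = (X + Y) / N := by field_simp
  have e5 : Real.sqrt (X / N1) * Real.sqrt (Y / N0) * (N1 * N0 / N)
      = Real.sqrt (X * (N0 / N) * (Y * (N1 / N))) := by
    rw [← Real.sqrt_mul (by positivity)]
    rw [eq_comm, Real.sqrt_eq_iff_mul_self_eq (by positivity) (by positivity)]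
    rw [show ∀ z y : ℝ, z * y * (z * y) = (z * z) * y ^ 2 by intros; ring, Real.mul_self_sqrt (by positivity)]
    field_simp
  rw [e1] at h
  have h' := mul_le_mul_of_nonneg_left h hN.le
  rw [← e5]
  calc _ = N * (N1 / N * (X / N1) * Real.log (X / N1) + N0 / N * (Y / N0) * Real.log (Y / N0) -
        (X + Y) / N * Real.log ((X + Y) / N)) := by field_simp
    _ ≤ _ := h'
    _ = _ := by field_simp; ring
end KS

namespace KS
variable {ι : Type*} [DecidableEq ι]

/-- swap two coordinates of a set -/
def sw (a c : ι) (s : Finset ι) : Finset ι := s.map (Equiv.swap a c).toEmbedding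

lemma mem_sw (a c : ι) (s : Finset ι) (x : ι) : x ∈ sw a c s ↔ Equiv.swap a c x ∈ s := by
  unfold sw; rw [Finset.mem_map_equiv]; simp

lemma card_sw (a c : ι) (s : Finset ι) : (sw a c s).card = s.card := by simp [sw]

lemma sw_sw (a c : ι) (s : Finset ι) : sw a c (sw a c s) = s := by
  ext x; simp [mem_sw]

lemma sw_comm (a c : ι) (s : Finset ι) : sw a c s = sw c a s := by
  ext x; simp [mem_sw, Equiv.swap_comm a c]

lemma sw_insert (a c i : ι) (ha : i ≠ a) (hc : i ≠ c) (s : Finset ι) :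
    sw a c (insert i s) = insert i (sw a c s) := by
  ext x
  simp only [mem_sw, mem_insert]
  constructor
  · rintro (h | h)
    · left; rw [Equiv.swap_apply_eq_iff, Equiv.swap_apply_of_ne_of_ne ha hc] at h; exact h
    · right; exact h
  · rintro (h | h)
    · left; rw [h, Equiv.swap_apply_of_ne_of_ne ha hc]
    · right; exact h

lemma sw_insert_left (a c : ι) (t : Finset ι) (ha : a ∉ t) (hc : c ∉ t) :
    sw a c (insert a t) = insert c t := by
  ext x
  simp only [mem_sw, mem_insert]
  rw [Equiv.swap_apply_def]
  split_ifs <;> grind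

lemma sw_eq_self (a c : ι) (s : Finset ι) (h : a ∈ s ↔ c ∈ s) : sw a c s = s := by
  ext x
  rw [mem_sw, Equiv.swap_apply_def]
  split_ifs <;> grind

lemma sw_mem {U : Finset ι} {r : ℕ} {a c : ι} (ha : a ∈ U) (hc : c ∈ U) {s : Finset ι}
    (hs : s ∈ powersetCard r U) : sw a c s ∈ powersetCard r U := by
  rw [mem_powersetCard] at hs ⊢
  refine ⟨?_, by rw [card_sw]; exact hs.2⟩
  intro x hx
  rw [mem_sw, Equiv.swap_apply_def] at hx
  split_ifs at hx with h1 h2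
  · rw [h1]; exact ha
  · rw [h2]; exact hc
  · exact hs.1 hx

lemma Sm_sw {U : Finset ι} {r : ℕ} {a c : ι} (ha : a ∈ U) (hc : c ∈ U) (f : Finset ι → ℝ) :
    Sm U r (fun s => f (sw a c s)) = Sm U r f := by
  unfold Sm
  exact Finset.sum_nbij' (sw a c) (sw a c) (fun s hs => sw_mem ha hc hs) (fun s hs => sw_mem ha hc hs)
    (fun s _ => sw_sw a c s) (fun s _ => sw_sw a c s) (fun s _ => rfl)

lemma Sm_congr {U : Finset ι} {r : ℕ} {f g : Finset ι → ℝ} (h : ∀ s ∈ powersetCard r U, f s = g s) :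
    Sm U r f = Sm U r g := Finset.sum_congr rfl h

lemma Sm_mono {U : Finset ι} {r : ℕ} {f g : Finset ι → ℝ} (h : ∀ s ∈ powersetCard r U, f s ≤ g s) :
    Sm U r f ≤ Sm U r g := Finset.sum_le_sum h

lemma Sm_nonneg {U : Finset ι} {r : ℕ} {f : Finset ι → ℝ} (h : ∀ s ∈ powersetCard r U, 0 ≤ f s) :
    0 ≤ Sm U r f := Finset.sum_nonneg h

lemma Sm_add (U : Finset ι) (r : ℕ) (f g : Finset ι → ℝ) :
    Sm U r (fun s => f s + g s) = Sm U r f + Sm U r g := Finset.sum_add_distrib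

lemma Sm_sub (U : Finset ι) (r : ℕ) (f g : Finset ι → ℝ) :
    Sm U r (fun s => f s - g s) = Sm U r f - Sm U r g := Finset.sum_sub_distrib _ _

lemma Sm_mul (U : Finset ι) (r : ℕ) (c : ℝ) (f : Finset ι → ℝ) :
    Sm U r (fun s => c * f s) = c * Sm U r f := by unfold Sm; rw [Finset.mul_sum]

lemma Sm_sum {κ : Type*} (J : Finset κ) (U : Finset ι) (r : ℕ) (f : κ → Finset ι → ℝ) :
    Sm U r (fun s => ∑ j ∈ J, f j s) = ∑ j ∈ J, Sm U r (f j) := by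
  unfold Sm; rw [Finset.sum_comm]

lemma Sm_const (U : Finset ι) (r : ℕ) (c : ℝ) :
    Sm U r (fun _ => c) = (U.card.choose r : ℝ) * c := by
  unfold Sm; simp [Finset.card_powersetCard]

lemma Sm_out {U : Finset ι} {r : ℕ} (i : ι) (f : Finset ι → ℝ) :
    Sm U r (fun s => if i ∉ s then f s else 0) = Sm (U.erase i) r f := by
  unfold Sm
  rw [← Finset.sum_filter]
  apply Finset.sum_congr _ (fun _ _ => rfl)
  ext s
  simp only [mem_filter, mem_powersetCard, subset_erase]
  tauto

lemma Sm_in {U : Finset ι} {r : ℕ} {i : ι} (hi : i ∈ U) (f : Finset ι → ℝ) :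
    Sm U (r + 1) (fun s => if i ∈ s then f s else 0) = Sm (U.erase i) r (fun t => f (insert i t)) := by
  unfold Sm
  rw [← Finset.sum_filter]
  refine Finset.sum_nbij' (fun s => s.erase i) (fun t => insert i t) ?_ ?_ ?_ ?_ ?_
  · intro s hs
    simp only [mem_filter, mem_powersetCard] at hs ⊢
    refine ⟨erase_subset_erase _ hs.1.1, ?_⟩
    rw [card_erase_of_mem hs.2, hs.1.2]; rfl
  · intro t ht
    simp only [mem_filter, mem_powersetCard] at ht ⊢
    have : i ∉ t := fun h => by simpa using ht.1 h
    refine ⟨⟨?_, ?_⟩, mem_insert_self _ _⟩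
    · exact insert_subset hi (ht.1.trans (erase_subset _ _))
    · rw [card_insert_of_notMem this, ht.2]
  · intro s hs
    simp only [mem_filter] at hs
    exact insert_erase hs.2
  · intro t ht
    simp only [mem_powersetCard] at ht
    have : i ∉ t := fun h => by simpa using ht.1 h
    exact erase_insert this
  · intro s hs
    simp only [mem_filter] at hs
    rw [insert_erase hs.2]

lemma Sm_split {U : Finset ι} {r : ℕ} {i : ι} (hi : i ∈ U) (f : Finset ι → ℝ) :
    Sm U (r + 1) f = Sm (U.erase i) r (fun t => f (insert i t)) + Sm (U.erase i) (r + 1) f := by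
  rw [← Sm_in hi, ← Sm_out, ← Sm_add]
  apply Sm_congr; intro s _
  by_cases h : i ∈ s <;> simp [h]

lemma sum_out (U : Finset ι) (r : ℕ) (f : Finset ι → ℝ) :
    ∑ i ∈ U, Sm (U.erase i) r f = ((U.card : ℝ) - r) * Sm U r f := by
  simp_rw [← Sm_out]
  rw [← Sm_sum, ← Sm_mul]
  apply Sm_congr; intro s hs
  rw [mem_powersetCard] at hs
  rw [← Finset.sum_filter, Finset.sum_const, nsmul_eq_mul]
  congr 1
  have : U.filter (fun i => i ∉ s) = U \ s := by ext; simp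
  rw [this, card_sdiff_of_subset hs.1, Nat.cast_sub (card_le_card hs.1), hs.2]

lemma sum_in (U : Finset ι) (r : ℕ) (f : Finset ι → ℝ) :
    ∑ i ∈ U, Sm (U.erase i) r (fun t => f (insert i t)) = ((r : ℝ) + 1) * Sm U (r + 1) f := by
  have : ∀ i ∈ U, Sm (U.erase i) r (fun t => f (insert i t))
      = Sm U (r + 1) (fun s => if i ∈ s then f s else 0) := fun i hi => (Sm_in hi f).symm
  rw [Finset.sum_congr rfl this, ← Sm_sum, ← Sm_mul]
  apply Sm_congr; intro s hs
  rw [mem_powersetCard] at hs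
  rw [← Finset.sum_filter, Finset.sum_const, nsmul_eq_mul]
  congr 1
  have : U.filter (fun i => i ∈ s) = s := by ext x; simp; exact fun h => hs.1 h
  rw [this, hs.2]; push_cast; rfl

/-- Dirichlet form -/
noncomputable def En (U : Finset ι) (r : ℕ) (f : Finset ι → ℝ) : ℝ :=
  ∑ a ∈ U, ∑ c ∈ U, Sm U r (fun s => if a ∈ s ∧ c ∉ s then (f s - f (sw a c s)) ^ 2 else 0)

lemma En_nonneg (U : Finset ι) (r : ℕ) (f : Finset ι → ℝ) : 0 ≤ En U r f :=
  Finset.sum_nonneg fun _ _ => Finset.sum_nonneg fun _ _ => Sm_nonneg fun _ _ => by positivity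

/-- entropy of `f ^ 2`, unnormalized -/
noncomputable def Ent (U : Finset ι) (r : ℕ) (f : Finset ι → ℝ) : ℝ :=
  Sm U r (fun s => f s ^ 2 * Real.log (f s ^ 2))
    - Sm U r (fun s => f s ^ 2) * Real.log (Sm U r (fun s => f s ^ 2) / (U.card.choose r : ℝ))

lemma Ent_of_choose_one (U : Finset ι) (r : ℕ) (f : Finset ι → ℝ) (h : U.card.choose r = 1) :
    Ent U r f = 0 := by
  have h1 : (powersetCard r U).card = 1 := by rw [card_powersetCard, h]
  obtain ⟨s, hs⟩ := Finset.card_eq_one.1 h1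
  unfold Ent Sm
  rw [hs, h]; simp

lemma sum_erase_ite (U : Finset ι) (i : ι) (hi : i ∈ U) (g : ι → ℝ) :
    ∑ a ∈ U.erase i, g a = ∑ a ∈ U, if i ≠ a then g a else 0 := by
  rw [← Finset.sum_filter]
  apply Finset.sum_congr _ (fun _ _ => rfl)
  ext a; simp; tauto

lemma En_sum_out (U : Finset ι) (r : ℕ) (f : Finset ι → ℝ) :
    ∑ i ∈ U, En (U.erase i) r f = ((U.card : ℝ) - r - 1) * En U r f := by
  have h1 : ∀ i ∈ U, En (U.erase i) r f = ∑ a ∈ U, ∑ c ∈ U, Sm U r (fun s =>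
      if i ∉ s ∧ i ≠ c then (if a ∈ s ∧ c ∉ s then (f s - f (sw a c s)) ^ 2 else 0) else 0) := by
    intro i hi
    unfold En
    rw [sum_erase_ite U i hi]
    refine Finset.sum_congr rfl fun a _ => ?_
    rw [sum_erase_ite U i hi]
    by_cases hia : i = a
    · subst hia
      simp only [ne_eq, not_true_eq_false, if_false]
      symm
      refine Finset.sum_eq_zero fun c _ => ?_
      rw [← Sm_congr (f := fun _ => (0 : ℝ)), Sm_const, mul_zero]
      intro s _; split_ifs <;> tauto
    · rw [if_pos hia]
      refine Finset.sum_congr rfl fun c _ => ?_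
      by_cases hic : i = c
      · subst hic; simp [Sm]
      · rw [if_pos hic, ← Sm_out]
        apply Sm_congr; intro s _; simp [hic]
  rw [Finset.sum_congr rfl h1, Finset.sum_comm]
  unfold En
  rw [Finset.mul_sum]
  refine Finset.sum_congr rfl fun a ha => ?_
  rw [Finset.sum_comm, Finset.mul_sum]
  refine Finset.sum_congr rfl fun c hc => ?_
  rw [← Sm_sum, ← Sm_mul]
  apply Sm_congr; intro s hs
  rw [mem_powersetCard] at hs
  by_cases hac : a ∈ s ∧ c ∉ s
  · rw [← Finset.sum_filter, Finset.sum_const, nsmul_eq_mul]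
    congr 1
    have : U.filter (fun i => i ∉ s ∧ i ≠ c) = (U \ s).erase c := by ext; simp; tauto
    have hcm : c ∈ U \ s := by simp [hc, hac.2]
    rw [this, cast_card_erase_of_mem hcm, card_sdiff_of_subset hs.1, Nat.cast_sub (card_le_card hs.1), hs.2]
  · simp [hac]

lemma En_sum_in (U : Finset ι) (r : ℕ) (f : Finset ι → ℝ) :
    ∑ i ∈ U, En (U.erase i) r (fun t => f (insert i t)) = (r : ℝ) * En U (r + 1) f := by
  have h1 : ∀ i ∈ U, En (U.erase i) r (fun t => f (insert i t)) = ∑ a ∈ U, ∑ c ∈ U, Sm U (r + 1) (fun s =>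
      if i ∈ s ∧ i ≠ a then (if a ∈ s ∧ c ∉ s then (f s - f (sw a c s)) ^ 2 else 0) else 0) := by
    intro i hi
    unfold En
    rw [sum_erase_ite U i hi]
    refine Finset.sum_congr rfl fun a _ => ?_
    rw [sum_erase_ite U i hi]
    by_cases hia : i = a
    · subst hia
      simp [Sm]
    · rw [if_pos hia]
      refine Finset.sum_congr rfl fun c _ => ?_
      by_cases hic : i = c
      · subst hic
        simp only [ne_eq, not_true_eq_false, if_false]
        rw [← Sm_congr (f := fun _ => (0 : ℝ)), Sm_const, mul_zero]
        intro s _; split_ifs <;> tauto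
      · rw [if_pos hic]
        have e : Sm U (r + 1) (fun s =>
            if i ∈ s ∧ i ≠ a then (if a ∈ s ∧ c ∉ s then (f s - f (sw a c s)) ^ 2 else 0) else 0)
          = Sm U (r + 1) (fun s =>
            if i ∈ s then (if a ∈ s ∧ c ∉ s then (f s - f (sw a c s)) ^ 2 else 0) else 0) := by
          apply Sm_congr; intro s _; simp [hia]
        rw [e, Sm_in hi]
        apply Sm_congr; intro t _
        rw [sw_insert a c i hia hic]
        simp [mem_insert, Ne.symm hia, Ne.symm hic]
  rw [Finset.sum_congr rfl h1, Finset.sum_comm]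
  unfold En
  rw [Finset.mul_sum]
  refine Finset.sum_congr rfl fun a ha => ?_
  rw [Finset.sum_comm, Finset.mul_sum]
  refine Finset.sum_congr rfl fun c hc => ?_
  rw [← Sm_sum, ← Sm_mul]
  apply Sm_congr; intro s hs
  rw [mem_powersetCard] at hs
  by_cases hac : a ∈ s ∧ c ∉ s
  · rw [← Finset.sum_filter, Finset.sum_const, nsmul_eq_mul]
    congr 1
    have : U.filter (fun i => i ∈ s ∧ i ≠ a) = s.erase a := by
      ext x; simp; constructor
      · tauto
      · exact fun h => ⟨hs.1 h.2, h.2, h.1⟩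
    rw [this, cast_card_erase_of_mem hac.1, hs.2]; push_cast; ring
  · simp [hac]
end KS

set_option linter.unusedSectionVars false
set_option linter.unusedVariables false
namespace KS
variable {ι : Type*} [DecidableEq ι]

/-- energy in direction i -/
noncomputable def Zi (U : Finset ι) (r : ℕ) (f : Finset ι → ℝ) (i : ι) : ℝ :=
  ∑ c ∈ U, Sm U r (fun s => if i ∈ s ∧ c ∉ s then (f s - f (sw i c s)) ^ 2 else 0)

lemma En_eq_sum_Zi (U : Finset ι) (r : ℕ) (f : Finset ι → ℝ) : En U r f = ∑ i ∈ U, Zi U r f i := rfl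

lemma Zi_partA (U : Finset ι) (r : ℕ) (f : Finset ι → ℝ) (i : ι) (hi : i ∈ U) :
    ∑ c ∈ U, Sm U (r+1) (fun s => if i ∈ s ∧ c ∉ s then f s ^ 2 else 0)
      = ((U.card : ℝ) - (r + 1)) * Sm (U.erase i) r (fun t => f (insert i t) ^ 2) := by
  rw [← Sm_sum, ← Sm_in hi (fun s => f s ^ 2), ← Sm_mul]
  apply Sm_congr; intro s hs
  rw [mem_powersetCard] at hs
  by_cases h : i ∈ s
  · simp only [h, true_and, if_true]
    rw [← Finset.sum_filter, Finset.sum_const, nsmul_eq_mul]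
    congr 1
    have : U.filter (fun c => c ∉ s) = U \ s := by ext; simp
    rw [this, Finset.card_sdiff_of_subset hs.1, Nat.cast_sub (card_le_card hs.1), hs.2]
    push_cast; ring
  · simp [h]

lemma Zi_partB (U : Finset ι) (r : ℕ) (f : Finset ι → ℝ) (i : ι) (hi : i ∈ U) :
    ∑ c ∈ U, Sm U (r+1) (fun s => if i ∈ s ∧ c ∉ s then f (sw i c s) ^ 2 else 0)
      = ((r : ℝ) + 1) * Sm (U.erase i) (r+1) (fun t => f t ^ 2) := by
  have h1 : ∀ c ∈ U, Sm U (r+1) (fun s => if i ∈ s ∧ c ∉ s then f (sw i c s) ^ 2 else 0)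
      = Sm U (r+1) (fun s => if i ∉ s ∧ c ∈ s then f s ^ 2 else 0) := by
    intro c hc
    rw [← Sm_sw hi hc]
    apply Sm_congr; intro s hs
    simp only [mem_sw, sw_sw, Equiv.swap_apply_left, Equiv.swap_apply_right]
    congr 1
    rw [eq_iff_iff]; tauto
  rw [Finset.sum_congr rfl h1, ← Sm_sum, ← Sm_out i, ← Sm_mul]
  apply Sm_congr; intro s hs
  rw [mem_powersetCard] at hs
  by_cases h : i ∈ s
  · simp [h]
  · simp only [h, not_false_eq_true, true_and, if_true]
    rw [← Finset.sum_filter, Finset.sum_const, nsmul_eq_mul]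
    congr 1
    have : U.filter (fun c => c ∈ s) = s := by
      ext x; simp only [mem_filter]; exact ⟨fun h => h.2, fun h => ⟨hs.1 h, h⟩⟩
    rw [this, hs.2]; push_cast; ring

lemma coupling (U : Finset ι) (r : ℕ) (f : Finset ι → ℝ) (i : ι) (hi : i ∈ U) (X Y : ℝ)
    (hX : X = Sm (U.erase i) r (fun t => f (insert i t) ^ 2))
    (hY : Y = Sm (U.erase i) (r+1) (fun t => f t ^ 2)) :
    ((U.card : ℝ) - (r + 1)) * X + ((r : ℝ) + 1) * Y
      - 2 * √((((U.card : ℝ) - (r + 1)) * X) * (((r : ℝ) + 1) * Y)) ≤ Zi U (r+1) f i := by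
  rw [hX, hY, ← Zi_partA U r f i hi, ← Zi_partB U r f i hi]
  set P := U ×ˢ powersetCard (r+1) U
  set A : ι × Finset ι → ℝ := fun z => if i ∈ z.2 ∧ z.1 ∉ z.2 then f z.2 else 0
  set B : ι × Finset ι → ℝ := fun z => if i ∈ z.2 ∧ z.1 ∉ z.2 then f (sw i z.1 z.2) else 0
  have e1 : ∑ c ∈ U, Sm U (r+1) (fun s => if i ∈ s ∧ c ∉ s then f s ^ 2 else 0) = ∑ z ∈ P, A z ^ 2 := by
    unfold Sm; rw [← Finset.sum_product']
    apply Finset.sum_congr rfl; intro z _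
    simp only [A]; split_ifs <;> simp
  have e2 : ∑ c ∈ U, Sm U (r+1) (fun s => if i ∈ s ∧ c ∉ s then f (sw i c s) ^ 2 else 0) = ∑ z ∈ P, B z ^ 2 := by
    unfold Sm; rw [← Finset.sum_product']
    apply Finset.sum_congr rfl; intro z _
    simp only [B]; split_ifs <;> simp
  have e3 : Zi U (r+1) f i = ∑ z ∈ P, A z ^ 2 + ∑ z ∈ P, B z ^ 2 - 2 * ∑ z ∈ P, A z * B z := by
    unfold Zi Sm; rw [← Finset.sum_product', Finset.mul_sum, ← Finset.sum_add_distrib, ← Finset.sum_sub_distrib]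
    apply Finset.sum_congr rfl; intro z _
    simp only [A, B]; split_ifs <;> ring
  rw [e1, e2, e3]
  have := Real.sum_mul_le_sqrt_mul_sqrt P A B
  rw [← Real.sqrt_mul (Finset.sum_nonneg fun _ _ => sq_nonneg _)] at this
  linarith

/-- log-Sobolev constant -/
noncomputable def LC (n r : ℝ) : ℝ := 12 + 2 * (2 * Real.log n - Real.log r - Real.log (n - r))

lemma mlogm (m : ℝ) (hm : 1 ≤ m) : m * Real.log m - (m - 1) * Real.log (m - 1) ≤ 1 + Real.log m := by
  rcases hm.eq_or_lt with rfl | h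
  · simp
  have h1 : 0 < m - 1 := by linarith
  have h2 := Real.log_le_sub_one_of_pos (x := m / (m-1)) (by positivity)
  rw [Real.log_div (by positivity) (by positivity)] at h2
  have h3 : m / (m-1) - 1 = 1 / (m-1) := by field_simp; ring
  rw [h3, le_div_iff₀ h1] at h2
  nlinarith

lemma LC_num (n r : ℝ) (hr : 1 ≤ r) (hn : r + 1 ≤ n) :
    (r - 1) * LC (n-1) (r-1) + (n - r - 1) * LC (n-1) r
      + (8 + 2 * (2 * Real.log n - Real.log r - Real.log (n - r))) * ((n-1)/n) ≤ (n-1) * LC n r := by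
  unfold LC
  have e1 : n - 1 - (r - 1) = n - r := by ring
  rw [e1]
  have a1 := mlogm r hr
  have a2 := mlogm (n-r) (by linarith)
  have a3 : Real.log (n-1) ≤ Real.log n := Real.log_le_log (by linarith) (by linarith)
  have a4 : (n-1)/n ≤ 1 := by rw [div_le_one (by linarith)]; linarith
  have a5 : Real.log r ≤ Real.log n := Real.log_le_log (by linarith) (by linarith)
  have a6 : Real.log (n-r) ≤ Real.log n := Real.log_le_log (by linarith) (by linarith)
  have e2 : n - 1 - r = n - r - 1 := by ring
  rw [e2]
  set φ := 2 * Real.log n - Real.log r - Real.log (n - r) with hφ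
  have a7 : (8 + 2 * φ) * ((n-1)/n) ≤ (8 + 2 * φ) := by
    apply mul_le_of_le_one_right _ a4
    linarith
  have a8 : (n-2) * Real.log (n-1) ≤ (n-2) * Real.log n := mul_le_mul_of_nonneg_left a3 (by linarith)
  rw [hφ] at a7 ⊢
  nlinarith

lemma LC_nonneg (n r : ℝ) (hr : 0 < r) (hn : r < n) : 0 ≤ LC n r := by
  unfold LC
  have a5 : Real.log r ≤ Real.log n := Real.log_le_log (by linarith) (by linarith)
  have a6 : Real.log (n-r) ≤ Real.log n := Real.log_le_log (by linarith) (by linarith)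
  linarith

lemma Ent_split (U : Finset ι) (r : ℕ) (f : Finset ι → ℝ) (i : ι) (hi : i ∈ U) (h : r + 1 < U.card) :
    Ent U (r+1) f ≤ Ent (U.erase i) r (fun t => f (insert i t)) + Ent (U.erase i) (r+1) f
      + (8 + 2 * (2 * Real.log U.card - Real.log ((r:ℝ)+1) - Real.log ((U.card:ℝ) - (r+1)))) / U.card * Zi U (r+1) f i := by
  obtain ⟨n, hn⟩ : ∃ n, U.card = n + 1 := ⟨U.card - 1, by omega⟩
  have hc : (U.erase i).card = n := by rw [card_erase_of_mem hi, hn]; rfl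
  unfold Ent
  rw [Sm_split hi (fun s => f s ^ 2 * Real.log (f s ^ 2)), Sm_split hi (fun s => f s ^ 2), hc, hn]
  set X := Sm (U.erase i) r (fun t => f (insert i t) ^ 2) with hX
  set Y := Sm (U.erase i) (r+1) (fun t => f t ^ 2) with hY
  have hcoup := coupling U r f i hi X Y hX hY
  rw [hn] at hcoup
  have hX0 : 0 ≤ X := Sm_nonneg fun _ _ => sq_nonneg _
  have hY0 : 0 ≤ Y := Sm_nonneg fun _ _ => sq_nonneg _
  have hrn : r + 1 ≤ n := by omega
  have N1 : (0:ℝ) < n.choose r := by exact_mod_cast Nat.choose_pos (by omega)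
  have N0 : (0:ℝ) < n.choose (r+1) := by exact_mod_cast Nat.choose_pos (by omega)
  have hrn' : (r:ℝ) + 1 ≤ n := by exact_mod_cast hrn
  have hr0 : (0:ℝ) ≤ r := by positivity
  have hN : ((n+1).choose (r+1) : ℝ) = n.choose r + n.choose (r+1) := by
    rw [Nat.choose_succ_succ]; push_cast; ring
  have f1 : (n.choose (r+1) : ℝ) * (r+1) = n.choose r * (n - r) := by
    have := Nat.choose_succ_right_eq n r
    have h2 : ((n - r : ℕ) : ℝ) = n - r := Nat.cast_sub (by omega)
    rw [← h2]; exact_mod_cast this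
  have hN' : (0:ℝ) < n.choose r + n.choose (r+1) := by positivity
  have r1 : (n.choose r : ℝ) / (n.choose r + n.choose (r+1)) = (r+1)/(n+1) := by
    rw [div_eq_div_iff hN'.ne' (by positivity)]
    nlinarith
  have r0 : (n.choose (r+1) : ℝ) / (n.choose r + n.choose (r+1)) = (n-r)/(n+1) := by
    rw [div_eq_div_iff hN'.ne' (by positivity)]
    nlinarith
  have hnr : (0:ℝ) < n - r := by linarith
  have r1' : (n.choose r + n.choose (r+1) : ℝ) / n.choose r = (n+1)/(r+1) := by
    rw [← inv_div, r1, inv_div]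
  have r0' : (n.choose r + n.choose (r+1) : ℝ) / n.choose (r+1) = (n+1)/(n-r) := by
    rw [← inv_div, r0, inv_div]
  have hb := bracket X Y (n.choose r) (n.choose (r+1)) (4 + (2 * Real.log ((n:ℝ)+1) - Real.log ((r:ℝ)+1) - Real.log ((n:ℝ) - r))) hX0 hY0 N1 N0 (by
    rw [r1', r0', Real.log_div (by positivity) (by positivity), Real.log_div (by positivity) (by positivity)]
    linarith)
  rw [r1, r0] at hb
  have e5 : X * ((n - r) / (n + 1)) * (Y * ((r + 1) / (n + 1))) = ((((n:ℝ)-r) * X) * ((r+1) * Y)) / ((n:ℝ)+1)^2 := by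
    field_simp
  rw [e5, Real.sqrt_div' _ (by positivity), Real.sqrt_sq (by positivity)] at hb
  push_cast at hcoup ⊢
  have e6 : (n:ℝ) + 1 - (r+1) = n - r := by ring
  rw [e6] at hcoup ⊢
  rw [hN]
  set φ := (2 * Real.log ((n:ℝ)+1) - Real.log ((r:ℝ)+1) - Real.log ((n:ℝ) - r)) with hφ
  have hφ0 : 0 ≤ φ := by
    have a5 : Real.log ((r:ℝ)+1) ≤ Real.log ((n:ℝ)+1) := Real.log_le_log (by linarith) (by linarith)
    have a6 : Real.log ((n:ℝ)-r) ≤ Real.log ((n:ℝ)+1) := Real.log_le_log (by linarith) (by linarith)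
    linarith
  have hfin : (8 + 2 * φ) / ((n:ℝ)+1) * ((n - r) * X + (r + 1) * Y - 2 * √((n - r) * X * ((r + 1) * Y))) ≤ (8 + 2 * φ) / ((n:ℝ)+1) * Zi U (r+1) f i :=
    mul_le_mul_of_nonneg_left hcoup (by positivity)
  have e7 : 2 * (4 + φ) *
      (X * ((n - r) / (n + 1)) + Y * ((r + 1) / (n + 1)) -
        2 * (√((n - r) * X * ((r + 1) * Y)) / (n + 1))) = (8 + 2 * φ) / ((n:ℝ)+1) * ((n - r) * X + (r + 1) * Y - 2 * √((n - r) * X * ((r + 1) * Y))) := by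
    field_simp; ring
  rw [e7] at hb
  linarith

theorem LSI (m : ℕ) : ∀ (U : Finset ι) (r : ℕ) (f : Finset ι → ℝ), U.card = m → 0 < r → r < m →
    (m : ℝ) * Ent U r f ≤ LC m r * En U r f := by
  induction m with
  | zero => intro U r f _ h1 h2; omega
  | succ n ih =>
    intro U r' f hU hr hrn
    obtain ⟨r, rfl⟩ : ∃ r, r' = r + 1 := ⟨r' - 1, by omega⟩
    have hce : ∀ i ∈ U, (U.erase i).card = n := fun i hi => by rw [card_erase_of_mem hi, hU]; rfl
    have hn1 : 1 ≤ n := by omega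
    have s1 : (n:ℝ) * ∑ i ∈ U, Ent (U.erase i) r (fun t => f (insert i t)) ≤ r * LC n r * En U (r+1) f := by
      rcases Nat.eq_zero_or_pos r with rfl | h0
      · rw [Finset.sum_eq_zero]; · simp
        intro i hi; apply Ent_of_choose_one; simp
      · have := En_sum_in U r f
        rw [mul_comm (r:ℝ), mul_assoc, ← this, Finset.mul_sum, Finset.mul_sum]
        apply Finset.sum_le_sum; intro i hi
        exact ih _ _ _ (hce i hi) h0 (by omega)
    have s0 : (n:ℝ) * ∑ i ∈ U, Ent (U.erase i) (r+1) f ≤ ((n:ℝ) - (r + 1)) * LC n (r+1) * En U (r+1) f := by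
      have h0 : r + 1 ≤ n := by omega
      rcases h0.eq_or_lt with h0 | h0
      · rw [Finset.sum_eq_zero]
        · rw [← h0]; simp
        intro i hi; apply Ent_of_choose_one; rw [hce i hi, h0]; simp
      · have := En_sum_out U (r+1) f
        rw [hU] at this
        push_cast at this
        have e : (n:ℝ) - (r+1) = n + 1 - (r+1) - 1 := by ring
        rw [e, mul_comm _ (LC _ _), mul_assoc, ← this, Finset.mul_sum, Finset.mul_sum]
        apply Finset.sum_le_sum; intro i hi
        have := ih _ (r+1) f (hce i hi) (by omega) (by omega)
        push_cast at this; exact this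
    have s2 : ∑ i ∈ U, Ent U (r+1) f ≤ ∑ i ∈ U, (Ent (U.erase i) r (fun t => f (insert i t)) + Ent (U.erase i) (r+1) f
      + (8 + 2 * (2 * Real.log U.card - Real.log ((r:ℝ)+1) - Real.log ((U.card:ℝ) - (r+1)))) / U.card * Zi U (r+1) f i) :=
      Finset.sum_le_sum fun i hi => Ent_split U r f i hi (by omega)
    rw [Finset.sum_const, nsmul_eq_mul, Finset.sum_add_distrib, Finset.sum_add_distrib, ← Finset.mul_sum,
      ← En_eq_sum_Zi, hU] at s2
    have hnum := LC_num ((n:ℝ)+1) ((r:ℝ)+1) (by linarith [(Nat.cast_nonneg r : (0:ℝ) ≤ r)]) (by exact_mod_cast (by omega : r + 1 + 1 ≤ n + 1))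
    have e1 : (n:ℝ) + 1 - 1 = n := by ring
    have e2 : (r:ℝ) + 1 - 1 = r := by ring
    rw [e1, e2] at hnum
    push_cast at s2 ⊢
    have hE := En_nonneg U (r+1) f
    have hn0 : (0:ℝ) < n := by exact_mod_cast hn1
    refine le_of_mul_le_mul_left ?_ hn0
    have h3 := mul_le_mul_of_nonneg_left s2 hn0.le
    have h4 := mul_le_mul_of_nonneg_right hnum hE
    refine h3.trans ?_
    set φ := (2 * Real.log ((n:ℝ)+1) - Real.log ((r:ℝ)+1) - Real.log ((n:ℝ) + 1 - (r+1)))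
    have e8 : (8 + 2 * φ) / (n+1) * En U (r+1) f * n = (8 + 2 * φ) * (n / (n+1)) * En U (r+1) f := by ring
    nlinarith
end KS

set_option linter.unusedSectionVars false
set_option linter.unusedVariables false
namespace KS
variable {ι : Type*} [DecidableEq ι]

/-- the monomial `AND_T` -/
noncomputable def AN (T s : Finset ι) : ℝ := if T ⊆ s then 1 else 0

/-- polynomials of degree `< K` -/
noncomputable def PS (K : ℕ) : Submodule ℝ (Finset ι → ℝ) :=
  Submodule.span ℝ {g | ∃ T : Finset ι, T.card < K ∧ g = AN T}

lemma AN_mem {K : ℕ} (T : Finset ι) (h : T.card < K) : AN T ∈ PS K :=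
  Submodule.subset_span ⟨T, h, rfl⟩

lemma PS_mono {K K' : ℕ} (h : K ≤ K') : (PS K : Submodule ℝ (Finset ι → ℝ)) ≤ PS K' := by
  apply Submodule.span_mono
  rintro g ⟨T, hT, rfl⟩; exact ⟨T, by omega, rfl⟩

lemma PS_zero {F : Finset ι → ℝ} (h : F ∈ PS 0) : F = 0 := by
  unfold PS at h
  have : {g : Finset ι → ℝ | ∃ T : Finset ι, T.card < 0 ∧ g = AN T} = ∅ := by
    ext; simp
  rw [this, Submodule.span_empty] at h
  simpa using h

lemma AN_empty : AN (∅ : Finset ι) = fun _ => (1:ℝ) := by ext; simp [AN]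

lemma PS_const (K : ℕ) (c : ℝ) : (fun _ => c : Finset ι → ℝ) ∈ PS (K+1) := by
  have h := (PS (ι := ι) (K+1)).smul_mem c (AN_mem ∅ (by simp))
  rw [AN_empty] at h
  convert h using 1; ext; simp

lemma PS_one {F : Finset ι → ℝ} (h : F ∈ PS 1) : ∃ c, F = fun _ => c := by
  unfold PS at h
  induction h using Submodule.span_induction with
  | mem x hx =>
    obtain ⟨T, hT, rfl⟩ := hx
    have : T = ∅ := by rw [← Finset.card_eq_zero]; omega
    exact ⟨1, by rw [this, AN_empty]⟩
  | zero => exact ⟨0, rfl⟩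
  | add x y _ _ hx hy =>
    obtain ⟨c, rfl⟩ := hx; obtain ⟨d, rfl⟩ := hy; exact ⟨c + d, rfl⟩
  | smul a x _ hx => obtain ⟨c, rfl⟩ := hx; exact ⟨a * c, rfl⟩

lemma PS_map {K K' : ℕ} (φ : (Finset ι → ℝ) →ₗ[ℝ] (Finset ι → ℝ))
    (h : ∀ T : Finset ι, T.card < K → φ (AN T) ∈ PS K') {F : Finset ι → ℝ} (hF : F ∈ PS K) : φ F ∈ PS K' := by
  have : PS K ≤ (PS K').comap φ := by
    apply Submodule.span_le.2
    rintro g ⟨T, hT, rfl⟩; exact h T hT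
  exact this hF

lemma PS_comp {K K' : ℕ} (φ : Finset ι → Finset ι)
    (h : ∀ T : Finset ι, T.card < K → (fun s => AN T (φ s)) ∈ PS K') {F : Finset ι → ℝ} (hF : F ∈ PS K) :
    (fun s => F (φ s)) ∈ PS K' :=
  PS_map (LinearMap.funLeft ℝ ℝ φ) h hF

lemma AN_sw (a c : ι) (T s : Finset ι) : AN T (sw a c s) = AN (sw a c T) s := by
  unfold AN
  congr 1
  rw [eq_iff_iff]
  constructor
  · intro h x hx
    rw [mem_sw] at hx
    have := h hx
    rw [mem_sw] at this; simpa using this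
  · intro h x hx
    rw [mem_sw]; apply h; rw [mem_sw]; simpa using hx

lemma PS_sw {K : ℕ} (a c : ι) {F : Finset ι → ℝ} (hF : F ∈ PS K) : (fun s => F (sw a c s)) ∈ PS K := by
  apply PS_comp _ _ hF
  intro T hT
  have : (fun s => AN T (sw a c s)) = AN (sw a c T) := by ext s; exact AN_sw a c T s
  rw [this]; exact AN_mem _ (by rw [card_sw]; exact hT)

lemma AN_insert (i : ι) (T s : Finset ι) : AN T (insert i s) = AN (T.erase i) s := by
  unfold AN
  congr 1
  rw [eq_iff_iff, Finset.subset_insert_iff]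

lemma PS_insert {K : ℕ} (i : ι) {F : Finset ι → ℝ} (hF : F ∈ PS K) : (fun s => F (insert i s)) ∈ PS K := by
  apply PS_comp _ _ hF
  intro T hT
  have : (fun s => AN T (insert i s)) = AN (T.erase i) := by ext s; exact AN_insert i T s
  rw [this]; exact AN_mem _ (lt_of_le_of_lt (card_erase_le) hT)

lemma AN_mul (T T' s : Finset ι) : AN T s * AN T' s = AN (T ∪ T') s := by
  unfold AN
  by_cases h : T ⊆ s <;> by_cases h' : T' ⊆ s <;> simp [h, h', Finset.union_subset_iff]

lemma PS_mul {a b : ℕ} {F G : Finset ι → ℝ} (hF : F ∈ PS (a+1)) (hG : G ∈ PS (b+1)) :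
    (fun s => F s * G s) ∈ PS (a + b + 1) := by
  refine PS_map (K := a+1) (LinearMap.mulRight ℝ G) ?_ hF
  intro T hT
  change AN T * G ∈ _
  refine PS_map (K := b+1) (LinearMap.mulLeft ℝ (AN T)) ?_ hG
  intro T' hT'
  have : (LinearMap.mulLeft ℝ (AN T)) (AN T') = AN (T ∪ T') := by ext s; exact AN_mul T T' s
  rw [this]; exact AN_mem _ (lt_of_le_of_lt (card_union_le _ _) (by omega))

lemma exists_proj (U : Finset ι) (r K : ℕ) (F : Finset ι → ℝ) :
    ∃ P ∈ PS K, ∀ P' ∈ PS K, Sm U r (fun s => (F s - P s) * P' s) = 0 := by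
  let E := EuclideanSpace ℝ {s // s ∈ powersetCard r U}
  let φ : (Finset ι → ℝ) →ₗ[ℝ] E :=
    (WithLp.linearEquiv 2 ℝ ({s // s ∈ powersetCard r U} → ℝ)).symm.toLinearMap ∘ₗ LinearMap.funLeft ℝ ℝ (fun s : {s // s ∈ powersetCard r U} => s.1)
  have hφ : ∀ G s, φ G s = G s.1 := fun G s => rfl
  obtain ⟨y, hy, z, hz, hyz⟩ := ((PS K).map φ).exists_add_mem_mem_orthogonal (φ F)
  obtain ⟨P, hP, rfl⟩ := hy
  refine ⟨P, hP, fun P' hP' => ?_⟩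
  have h := (Submodule.mem_orthogonal _ _).1 hz (φ P') ⟨P', hP', rfl⟩
  have hz' : z = φ F - φ P := by rw [hyz]; abel
  rw [hz', PiLp.inner_apply] at h
  unfold Sm
  rw [← Finset.sum_coe_sort]
  rw [← h]
  apply Finset.sum_congr rfl; intro s _
  rw [PiLp.sub_apply, hφ, hφ, hφ]
  simp

/-- generator -/
noncomputable def Wop (U : Finset ι) (F : Finset ι → ℝ) (s : Finset ι) : ℝ :=
  ∑ a ∈ U, ∑ c ∈ U, (F s - F (sw a c s))

lemma Sm_Wop (U : Finset ι) (r : ℕ) (G F : Finset ι → ℝ) :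
    Sm U r (fun s => G s * Wop U F s) = ∑ a ∈ U, ∑ c ∈ U, Sm U r (fun s => G s * (F s - F (sw a c s))) := by
  unfold Wop
  simp_rw [Finset.mul_sum]
  rw [Sm_sum]
  apply Finset.sum_congr rfl; intro a _; rw [Sm_sum]

lemma Wop_symm (U : Finset ι) (r : ℕ) (G F : Finset ι → ℝ) :
    Sm U r (fun s => G s * Wop U F s) = Sm U r (fun s => F s * Wop U G s) := by
  rw [Sm_Wop, Sm_Wop]
  apply Finset.sum_congr rfl; intro a ha
  apply Finset.sum_congr rfl; intro c hc
  have h := Sm_sw (r := r) ha hc (fun s => F s * G (sw a c s))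
  simp only [sw_sw] at h
  simp_rw [mul_sub]
  rw [Sm_sub, Sm_sub, ← h]
  congr 1
  · apply Sm_congr; intros; ring
  · apply Sm_congr; intros; ring

lemma Sm_Wop_self (U : Finset ι) (r : ℕ) (F : Finset ι → ℝ) :
    Sm U r (fun s => F s * Wop U F s) = En U r F := by
  have h1 : ∀ a ∈ U, ∀ c ∈ U, 2 * Sm U r (fun s => F s * (F s - F (sw a c s)))
      = Sm U r (fun s => if a ∈ s ∧ c ∉ s then (F s - F (sw a c s)) ^ 2 else 0)
       + Sm U r (fun s => if c ∈ s ∧ a ∉ s then (F s - F (sw c a s)) ^ 2 else 0) := by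
    intro a ha c hc
    have h := Sm_sw (r := r) ha hc (fun s => F s * (F s - F (sw a c s)))
    simp only [sw_sw] at h
    rw [two_mul]; nth_rw 1 [← h]
    rw [← Sm_add, ← Sm_add]
    apply Sm_congr; intro s _
    rw [sw_comm c a]
    by_cases hh : (a ∈ s ↔ c ∈ s)
    · rw [sw_eq_self a c s hh]; simp
    · by_cases h2 : a ∈ s <;> by_cases h3 : c ∈ s <;> simp [h2, h3] at hh ⊢ <;> ring
  have h2 : 2 * Sm U r (fun s => F s * Wop U F s) = En U r F + En U r F := by
    rw [Sm_Wop, Finset.mul_sum]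
    conv_rhs => rw [En]
    rw [Finset.sum_congr rfl (fun a ha => by rw [Finset.mul_sum, Finset.sum_congr rfl (h1 a ha), Finset.sum_add_distrib])]
    rw [Finset.sum_add_distrib]
    congr 1
    rw [Finset.sum_comm]
  linarith

lemma sw_eq_ins (a c : ι) (T : Finset ι) (ha : a ∈ T) (hc : c ∉ T) : sw a c T = insert c (T.erase a) := by
  have : T = insert a (T.erase a) := (insert_erase ha).symm
  conv_lhs => rw [this]
  rw [sw_insert_left a c _ (by simp) (by simp [hc])]

lemma Wop_AN (U : Finset ι) (r : ℕ) (T : Finset ι) (hT : T ⊆ U) (s : Finset ι) (hs : s ∈ powersetCard r U) :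
    Wop U (AN T) s = 2 * (T.card * ((U.card : ℝ) - T.card + 1)) * AN T s
      - 2 * ((r:ℝ) - T.card + 1) * ∑ a ∈ T, AN (T.erase a) s := by
  rw [mem_powersetCard] at hs
  have h1 : ∀ a ∈ U, ∀ c ∈ U, AN T s - AN T (sw a c s) =
      (if a ∈ T then if c ∉ T then AN T s - AN (insert c (T.erase a)) s else 0 else 0)
      + (if c ∈ T then if a ∉ T then AN T s - AN (insert a (T.erase c)) s else 0 else 0) := by
    intro a ha c hc
    rw [AN_sw]
    by_cases h2 : a ∈ T <;> by_cases h3 : c ∈ T <;> simp only [h2, h3, not_true_eq_false, not_false_eq_true, if_true, if_false]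
    · rw [sw_eq_self _ _ _ (by simp [h2, h3])]; simp
    · rw [sw_eq_ins _ _ _ h2 h3]; simp
    · rw [sw_comm, sw_eq_ins _ _ _ h3 h2]; simp
    · rw [sw_eq_self _ _ _ (by simp [h2, h3])]; simp
  have h2 : Wop U (AN T) s = 2 * ∑ a ∈ U, ∑ c ∈ U, (if a ∈ T then if c ∉ T then AN T s - AN (insert c (T.erase a)) s else 0 else 0) := by
    unfold Wop
    rw [Finset.sum_congr rfl (fun a ha => Finset.sum_congr rfl (h1 a ha))]
    simp_rw [Finset.sum_add_distrib]
    rw [two_mul]; congr 1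
    rw [Finset.sum_comm]
  have h3 : ∀ a ∈ U, ∑ c ∈ U, (if a ∈ T then if c ∉ T then AN T s - AN (insert c (T.erase a)) s else 0 else 0)
      = if a ∈ T then ((U.card : ℝ) - T.card + 1) * AN T s - ((r:ℝ) - T.card + 1) * AN (T.erase a) s else 0 := by
    intro a ha
    by_cases haT : a ∈ T
    · simp only [haT, if_true]
      have hins : ∀ c, AN (insert c (T.erase a)) s = if c ∈ s then AN (T.erase a) s else 0 := by
        intro c; unfold AN
        by_cases hcs : c ∈ s <;> simp [Finset.insert_subset_iff, hcs]
      simp_rw [hins]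
      rw [← Finset.sum_filter]
      have e1 : U.filter (fun c => c ∉ T) = U \ T := by ext; simp
      rw [e1, Finset.sum_sub_distrib, Finset.sum_const, card_sdiff_of_subset hT, nsmul_eq_mul,
        Nat.cast_sub (card_le_card hT), ← Finset.sum_filter, Finset.sum_const, nsmul_eq_mul]
      have e2 : (U \ T).filter (fun c => c ∈ s) = s \ T := by
        ext x; simp only [mem_filter, mem_sdiff]
        constructor
        · rintro ⟨⟨_, h⟩, h'⟩; exact ⟨h', h⟩
        · rintro ⟨h, h'⟩; exact ⟨⟨hs.1 h, h'⟩, h⟩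
      rw [e2]
      have key : ((s \ T).card : ℝ) * AN (T.erase a) s = ((r:ℝ) - T.card + 1) * AN (T.erase a) s - AN T s := by
        by_cases h : T.erase a ⊆ s
        · have hd : (T.erase a).card + 1 = T.card := card_erase_add_one haT
          by_cases h' : a ∈ s
          · have hTs : T ⊆ s := by
              rw [← insert_erase haT]; exact insert_subset h' h
            rw [card_sdiff_of_subset hTs, Nat.cast_sub (card_le_card hTs), hs.2]
            simp [AN, h, hTs]
          · have hTs : ¬ T ⊆ s := fun hh => h' (hh haT)
            have : s \ T = s \ (T.erase a) := by
              ext x; simp only [mem_sdiff, mem_erase]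
              constructor
              · rintro ⟨h1, h2⟩; exact ⟨h1, fun h => h2 h.2⟩
              · rintro ⟨h1, h2⟩; exact ⟨h1, fun h => h2 ⟨fun e => h' (e ▸ h1), h⟩⟩
            rw [this, card_sdiff_of_subset h, Nat.cast_sub (card_le_card h), hs.2, ← hd]
            simp [AN, h, hTs]; ring
        · have hTs : ¬ T ⊆ s := fun hh => h ((erase_subset _ _).trans hh)
          simp [AN, h, hTs]
      rw [key]; ring
    · simp [haT]
  rw [h2, Finset.sum_congr rfl h3, ← Finset.sum_filter]
  have e1 : U.filter (fun c => c ∈ T) = T := by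
    ext x; simp only [mem_filter]; exact ⟨fun h => h.2, fun h => ⟨hT h, h⟩⟩
  rw [e1, Finset.sum_sub_distrib, Finset.sum_const, nsmul_eq_mul, ← Finset.mul_sum]
  ring

lemma Wop_deg (U : Finset ι) (r d : ℕ) {F : Finset ι → ℝ} (hF : F ∈ PS (d+2)) :
    ∃ P ∈ PS (d+1), ∀ s ∈ powersetCard r U, Wop U F s - 2 * ((d:ℝ)+1) * ((U.card:ℝ) - d) * F s = P s := by
  unfold PS at hF
  induction hF using Submodule.span_induction with
  | mem x hx =>
    obtain ⟨T, hT, rfl⟩ := hx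
    by_cases hTU : T ⊆ U
    · refine ⟨fun s => (2 * (T.card * ((U.card : ℝ) - T.card + 1)) - 2 * ((d:ℝ)+1) * ((U.card:ℝ) - d)) * AN T s
      - 2 * ((r:ℝ) - T.card + 1) * ∑ a ∈ T, AN (T.erase a) s, ?_, fun s hs => by rw [Wop_AN U r T hTU s hs]; ring⟩
      apply Submodule.sub_mem
      · rcases (by omega : T.card = d + 1 ∨ T.card < d + 1) with h | h
        · rw [h]; push_cast
          convert (PS (ι := ι) (d+1)).zero_mem using 1
          ext s; simp; left; ring
        · exact Submodule.smul_mem _ _ (AN_mem T h)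
      · have : (fun s => ∑ a ∈ T, AN (T.erase a) s) ∈ PS (d+1) := by
          have : (fun s => ∑ a ∈ T, AN (T.erase a) s) = ∑ a ∈ T, AN (T.erase a) := by ext; simp
          rw [this]
          apply Submodule.sum_mem
          intro a ha
          apply AN_mem; rw [card_erase_of_mem ha]
          have := card_pos.2 ⟨a, ha⟩
          omega
        exact Submodule.smul_mem _ (2 * ((r:ℝ) - T.card + 1)) this
    · refine ⟨0, Submodule.zero_mem _, fun s hs => ?_⟩
      have hz : ∀ s ∈ powersetCard r U, AN T s = 0 := by
        intro s hs
        rw [mem_powersetCard] at hs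
        unfold AN; rw [if_neg (fun h => hTU (h.trans hs.1))]
      unfold Wop
      rw [hz s hs, Finset.sum_eq_zero]; · simp
      intro a ha; apply Finset.sum_eq_zero; intro c hc
      rw [hz _ (sw_mem ha hc hs)]; simp
  | zero => exact ⟨0, Submodule.zero_mem _, fun s hs => by simp [Wop]⟩
  | add x y _ _ hx hy =>
    obtain ⟨P, hP, h1⟩ := hx; obtain ⟨Q, hQ, h2⟩ := hy
    refine ⟨P + Q, Submodule.add_mem _ hP hQ, fun s hs => ?_⟩
    rw [Pi.add_apply, Pi.add_apply, ← h1 s hs, ← h2 s hs]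
    have : Wop U (x+y) s = Wop U x s + Wop U y s := by
      unfold Wop; simp_rw [← Finset.sum_add_distrib]
      refine Finset.sum_congr rfl fun a _ => Finset.sum_congr rfl fun c _ => ?_
      simp only [Pi.add_apply]; ring
    rw [this]; ring
  | smul a x _ hx =>
    obtain ⟨P, hP, h1⟩ := hx
    refine ⟨a • P, Submodule.smul_mem _ _ hP, fun s hs => ?_⟩
    rw [Pi.smul_apply, Pi.smul_apply, ← h1 s hs]
    have : Wop U (a • x) s = a * Wop U x s := by
      unfold Wop; simp_rw [Finset.mul_sum]
      refine Finset.sum_congr rfl fun a _ => Finset.sum_congr rfl fun c _ => ?_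
      simp only [Pi.smul_apply, smul_eq_mul]; ring
    rw [this]; simp only [smul_eq_mul]; ring

lemma En_const (U : Finset ι) (r : ℕ) (c : ℝ) : En U r (fun _ => c) = 0 := by
  unfold En Sm; simp

lemma Wop_add (U : Finset ι) (x y : Finset ι → ℝ) (s : Finset ι) :
    Wop U (fun s => x s + y s) s = Wop U x s + Wop U y s := by
  unfold Wop; simp_rw [← Finset.sum_add_distrib]
  refine Finset.sum_congr rfl fun a _ => Finset.sum_congr rfl fun c _ => ?_
  ring

theorem En_le (U : Finset ι) (r : ℕ) (hr : r ≤ U.card) (d : ℕ) : ∀ F ∈ PS (d+1), En U r F ≤ 2 * d * U.card * Sm U r (fun s => F s ^ 2) := by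
  induction d with
  | zero => 
    intro F hF
    obtain ⟨c, rfl⟩ := PS_one hF
    rw [En_const]; simp
  | succ d ih =>
    intro F hF
    obtain ⟨F0, hF0, horth⟩ := exists_proj U r (d+1) F
    obtain ⟨F1, hF1⟩ : ∃ F1 : Finset ι → ℝ, ∀ s, F1 s = F s - F0 s := ⟨_, fun _ => rfl⟩
    have hF1' : F1 = F - F0 := by ext s; rw [hF1]; rfl
    have hF1m : F1 ∈ PS (d+2) := by rw [hF1']; exact Submodule.sub_mem _ hF (PS_mono (by omega) hF0)
    simp only [← hF1] at horth
    have hFe : F = fun s => F0 s + F1 s := by ext s; rw [hF1]; ring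
    obtain ⟨P0, hP0, h0⟩ := Wop_deg U r d (PS_mono (by omega : d + 1 ≤ d + 2) hF0)
    obtain ⟨P1, hP1, h1⟩ := Wop_deg U r d hF1m
    have hA : Sm U r (fun s => F1 s * Wop U F0 s) = 0 := by
      rw [← horth (fun s => P0 s + (2 * ((d:ℝ)+1) * ((U.card:ℝ) - d)) * F0 s) (Submodule.add_mem _ hP0 (Submodule.smul_mem _ (2 * ((d:ℝ)+1) * ((U.card:ℝ) - d)) hF0))]
      apply Sm_congr; intro s hs
      rw [← h0 s hs]; ring
    have hB : Sm U r (fun s => F1 s * Wop U F1 s) = 2 * ((d:ℝ)+1) * ((U.card:ℝ) - d) * Sm U r (fun s => F1 s ^ 2) := by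
      rw [← Sm_mul, ← sub_eq_zero, ← Sm_sub, ← horth P1 hP1]
      apply Sm_congr; intro s hs
      rw [← h1 s hs]; ring
    have hC := Wop_symm U r F0 F1
    rw [hA] at hC
    have hE : En U r F = En U r F0 + 2 * ((d:ℝ)+1) * ((U.card:ℝ) - d) * Sm U r (fun s => F1 s ^ 2) := by
      rw [← Sm_Wop_self, ← Sm_Wop_self, hFe]
      have hwa : ∀ s, Wop U (fun s => F0 s + F1 s) s = Wop U F0 s + Wop U F1 s := Wop_add U F0 F1
      simp only [hwa]
      have : (fun s => (F0 s + F1 s) * (Wop U F0 s + Wop U F1 s)) = fun s => (F0 s * Wop U F0 s + F0 s * Wop U F1 s) + (F1 s * Wop U F0 s + F1 s * Wop U F1 s) := by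
        ext s; ring
      rw [this, Sm_add, Sm_add, Sm_add, hA, hB, hC]; ring
    have hPy : Sm U r (fun s => F s ^ 2) = Sm U r (fun s => F0 s ^ 2) + Sm U r (fun s => F1 s ^ 2) := by
      have h2 : Sm U r (fun s => F1 s * F0 s) = 0 := horth F0 hF0
      have : (fun s => F s ^ 2) = fun s => (F0 s ^ 2 + F1 s ^ 2) + 2 * (F1 s * F0 s) := by
        ext s; rw [show F s = F0 s + F1 s by rw [hF1]; ring]; ring
      rw [this, Sm_add, Sm_mul, Sm_add, h2]; ring
    rw [hE, hPy]
    have i0 := ih F0 hF0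
    have n0 : 0 ≤ Sm U r (fun s => F0 s ^ 2) := Sm_nonneg fun _ _ => sq_nonneg _
    have n1 : 0 ≤ Sm U r (fun s => F1 s ^ 2) := Sm_nonneg fun _ _ => sq_nonneg _
    have hd : (0:ℝ) ≤ d := by positivity
    have hu : (0:ℝ) ≤ U.card := Nat.cast_nonneg _
    push_cast
    clear hFe hF1 hF1'
    have k1 : 2 * (d:ℝ) * U.card * Sm U r (fun s => F0 s ^ 2) ≤ 2 * (d+1) * U.card * Sm U r (fun s => F0 s ^ 2) := by
      gcongr; linarith
    have k2 : 2 * ((d:ℝ)+1) * (U.card - d) * Sm U r (fun s => F1 s ^ 2) ≤ 2 * (d+1) * U.card * Sm U r (fun s => F1 s ^ 2) := by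
      gcongr; linarith
    linarith
end KS

set_option linter.unusedSectionVars false
set_option linter.unusedVariables false
namespace KS
variable {ι : Type*} [DecidableEq ι]

lemma young (v μ y : ℝ) (hv : 0 ≤ v) (hμ : 0 < μ) :
    v * y ≤ v * Real.log v - v * Real.log μ - v + μ * Real.exp y := by
  rcases hv.eq_or_lt with rfl | hv
  · simp; positivity
  have h := Real.log_le_sub_one_of_pos (x := μ * Real.exp y / v) (by positivity)
  rw [Real.log_div (by positivity) (by positivity), Real.log_mul (by positivity) (by positivity), Real.log_exp] at h
  have h2 := mul_le_mul_of_nonneg_left h hv.le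
  have : v * (μ * Real.exp y / v - 1) = μ * Real.exp y - v := by field_simp
  rw [this] at h2
  linarith

lemma ent_set (U : Finset ι) (r : ℕ) (F : Finset ι → ℝ) (A : Finset ι → Prop) (t : ℝ) (ht : 0 ≤ t)
    (hA : Sm U r (fun s => if A s then 1 else 0) * Real.exp t ≤ U.card.choose r) :
    t * Sm U r (fun s => if A s then F s ^ 2 else 0) ≤ Ent U r F + Sm U r (fun s => F s ^ 2) := by
  have hS0 : 0 ≤ Sm U r (fun s => F s ^ 2) := Sm_nonneg fun _ _ => sq_nonneg _
  rcases hS0.eq_or_lt with hS | hS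
  · have hz : ∀ s ∈ powersetCard r U, F s ^ 2 = 0 := by
      unfold Sm at hS
      exact (Finset.sum_eq_zero_iff_of_nonneg (fun _ _ => sq_nonneg _)).1 hS.symm
    have e1 : Sm U r (fun s => if A s then F s ^ 2 else 0) = 0 := by
      apply Finset.sum_eq_zero; intro s hs; simp [hz s hs]
    have e2 : Sm U r (fun s => F s ^ 2 * Real.log (F s ^ 2)) = 0 := by
      apply Finset.sum_eq_zero; intro s hs; simp [hz s hs]
    unfold Ent
    rw [e1, e2, ← hS]; simp
  · have hN : (0:ℝ) < U.card.choose r := by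
      rcases Nat.eq_zero_or_pos (U.card.choose r) with h | h
      · exfalso
        have : powersetCard r U = ∅ := by
          rw [← Finset.card_eq_zero, card_powersetCard, h]
        unfold Sm at hS; rw [this] at hS; simp at hS
      · exact_mod_cast h
    set N : ℝ := (U.card.choose r : ℝ)
    set S := Sm U r (fun s => F s ^ 2)
    have hμ : 0 < S / N := by positivity
    have key : Sm U r (fun s => F s ^ 2 * (if A s then t else 0)) ≤
        Sm U r (fun s => F s ^ 2 * Real.log (F s ^ 2) - F s ^ 2 * Real.log (S / N) - F s ^ 2 + S / N * Real.exp (if A s then t else 0)) :=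
      Sm_mono fun s _ => young _ _ _ (sq_nonneg _) hμ
    have e1 : Sm U r (fun s => F s ^ 2 * (if A s then t else 0)) = t * Sm U r (fun s => if A s then F s ^ 2 else 0) := by
      rw [← Sm_mul]; apply Sm_congr; intro s _; split_ifs <;> ring
    have e2 : Sm U r (fun s => F s ^ 2 * Real.log (S / N)) = S * Real.log (S/N) := by
      rw [mul_comm S, ← Sm_mul]; apply Sm_congr; intro s _; ring
    have e3 : Sm U r (fun s => Real.exp (if A s then t else 0)) ≤ N + N := by
      have : Sm U r (fun s => Real.exp (if A s then t else 0)) ≤ Sm U r (fun s => Real.exp t * (if A s then 1 else 0) + 1) := by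
        apply Sm_mono; intro s _; split_ifs <;> simp
      refine this.trans ?_
      rw [Sm_add, Sm_mul, Sm_const]
      simp only [N] at hA ⊢
      linarith
    rw [e1, Sm_add, Sm_sub, Sm_sub, e2, Sm_mul] at key
    have e4 : S / N * Sm U r (fun s => Real.exp (if A s then t else 0)) ≤ S / N * (N + N) :=
      mul_le_mul_of_nonneg_left e3 hμ.le
    have e5 : S / N * (N + N) = 2 * S := by field_simp; ring
    have hEnt : Ent U r F = Sm U r (fun s => F s ^ 2 * Real.log (F s ^ 2)) - S * Real.log (S / N) := rfl
    rw [hEnt]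
    simp only [S] at *
    linarith

lemma Ent_le (U : Finset ι) (r d : ℕ) (hr : r ≤ U.card) (F : Finset ι → ℝ) (hF : F ∈ PS (d+1)) (X : ℝ) (hX0 : 0 ≤ X)
    (hX : 0 < r → r < U.card → LC U.card r ≤ X) : Ent U r F ≤ 2 * d * X * Sm U r (fun s => F s ^ 2) := by
  have hS0 : 0 ≤ Sm U r (fun s => F s ^ 2) := Sm_nonneg fun _ _ => sq_nonneg _
  have hR : 0 ≤ 2 * d * X * Sm U r (fun s => F s ^ 2) := by positivity
  rcases Nat.eq_zero_or_pos r with rfl | h0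
  · rw [Ent_of_choose_one _ _ _ (by simp)]; exact hR
  rcases hr.eq_or_lt with h1 | h1
  · rw [Ent_of_choose_one _ _ _ (by rw [h1]; simp)]; exact hR
  have h2 := LSI U.card U r F rfl h0 h1
  have h3 := En_le U r hr d F hF
  have hn : (0:ℝ) < U.card := by exact_mod_cast (by omega : 0 < U.card)
  have h4 : LC U.card r * En U r F ≤ X * (2 * d * U.card * Sm U r (fun s => F s ^ 2)) :=
    mul_le_mul (hX h0 h1) h3 (En_nonneg _ _ _) hX0
  refine le_of_mul_le_mul_left ?_ hn
  nlinarith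

lemma Sm_empty (U : Finset ι) (r : ℕ) (h : U.card < r) (F : Finset ι → ℝ) : Sm U r F = 0 := by
  unfold Sm; rw [powersetCard_eq_empty.2 h]; simp

lemma log_facts : (0.6931:ℝ) ≤ Real.log 2 ∧ Real.log 3 ≤ 1.6 * Real.log 2 := by
  refine ⟨by linarith [Real.log_two_gt_d9], ?_⟩
  have h1 : Real.log ((3:ℝ)^5) ≤ Real.log ((2:ℝ)^8) := Real.log_le_log (by norm_num) (by norm_num)
  rw [Real.log_pow, Real.log_pow] at h1
  push_cast at h1; linarith

lemma log_R (R : ℝ) (hR : 4 ≤ R) : 2 * Real.log 2 ≤ Real.log R := by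
  have : Real.log ((2:ℝ)^2) ≤ Real.log R := Real.log_le_log (by norm_num) (by linarith)
  rw [Real.log_pow] at this; exact_mod_cast this

lemma LC_le (n r R : ℝ) (hR : 4 ≤ R) (h0 : 0 < r) (h1 : r < n) (h2 : n ≤ 3 * R * r) (h3 : n ≤ 3 * R * (n - r)) :
    LC n r ≤ 16 * Real.log R := by
  have a1 : Real.log n ≤ Real.log (3 * R * r) := Real.log_le_log (by linarith) h2
  have a2 : Real.log n ≤ Real.log (3 * R * (n - r)) := Real.log_le_log (by linarith) h3
  rw [Real.log_mul (by positivity) (by positivity), Real.log_mul (by positivity) (by positivity)] at a1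
  rw [Real.log_mul (by positivity) (by linarith), Real.log_mul (by positivity) (by positivity)] at a2
  have := log_R R hR
  obtain ⟨b1, b2⟩ := log_facts
  unfold LC; linarith

lemma exp_le_pow (R : ℝ) (hR : 4 ≤ R) (d : ℕ) :
    Real.exp (16 * (2 * d * (16 * Real.log R) + 1)) ≤ R ^ (512 * d + 12) := by
  have hR0 : 0 < R := by linarith
  rw [← Real.log_le_log_iff (Real.exp_pos _) (by positivity), Real.log_exp, Real.log_pow]
  have := log_R R hR
  obtain ⟨b1, b2⟩ := log_facts
  push_cast; linarith

theorem AC (U : Finset ι) (r d : ℕ) (F : Finset ι → ℝ) (hF : F ∈ PS (d+1)) (R : ℝ) (hR : 4 ≤ R)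
    (hX : 0 < r → r < U.card → (U.card : ℝ) ≤ 3 * R * r ∧ (U.card : ℝ) ≤ 3 * R * ((U.card : ℝ) - r))
    (A : Finset ι → Prop)
    (hA : Sm U r (fun s => if A s then 1 else 0) * R ^ (512 * d + 12) ≤ U.card.choose r) :
    Sm U r (fun s => if A s then F s ^ 2 else 0) ≤ Sm U r (fun s => F s ^ 2) / 16 := by
  rcases lt_or_ge U.card r with h | hr
  · rw [Sm_empty _ _ h, Sm_empty _ _ h]; simp
  have hl : 0 ≤ Real.log R := Real.log_nonneg (by linarith)
  have hc0 : 0 ≤ Sm U r (fun s => if A s then (1:ℝ) else 0) := Sm_nonneg fun _ _ => by positivity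
  have h1 := ent_set U r F A (16 * (2 * d * (16 * Real.log R) + 1)) (by positivity)
    ((mul_le_mul_of_nonneg_left (exp_le_pow R hR d) hc0).trans hA)
  have h2 := Ent_le U r d hr F hF (16 * Real.log R) (by positivity) (fun h0 h1 => by
    obtain ⟨h3, h4⟩ := hX h0 h1
    exact LC_le _ _ R hR (by exact_mod_cast h0) (by exact_mod_cast h1) h3 h4)
  have hp : 0 < 2 * d * (16 * Real.log R) + 1 := by positivity
  refine le_of_mul_le_mul_left ?_ hp
  linarith

def IntV (U : Finset ι) (r : ℕ) (F : Finset ι → ℝ) : Prop := ∀ s ∈ powersetCard r U, ∃ z : ℤ, F s = z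

lemma int_sq {x : ℝ} (h : ∃ z : ℤ, x = z) (hx : x ≠ 0) : 1 ≤ x ^ 2 := by
  obtain ⟨z, rfl⟩ := h
  have : z ≠ 0 := by exact_mod_cast hx
  have : 1 ≤ z ^ 2 := by have := sq_pos_of_ne_zero this; omega
  exact_mod_cast this

theorem AC_zero (U : Finset ι) (r d : ℕ) (D P : Finset ι → ℝ) (hP : P ∈ PS (d+1)) (R : ℝ) (hR : 4 ≤ R)
    (hX : 0 < r → r < U.card → (U.card : ℝ) ≤ 3 * R * r ∧ (U.card : ℝ) ≤ 3 * R * ((U.card : ℝ) - r))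
    (hDP : ∀ s ∈ powersetCard r U, D s = P s) (hD : IntV U r D)
    (hA : Sm U r (fun s => D s ^ 2) * R ^ (512 * d + 12) ≤ U.card.choose r) :
    ∀ s ∈ powersetCard r U, D s = 0 := by
  have hc : Sm U r (fun s => if D s ≠ 0 then (1:ℝ) else 0) ≤ Sm U r (fun s => D s ^ 2) := by
    apply Sm_mono; intro s hs
    by_cases h : D s = 0
    · simp [h]
    · simp only [ne_eq, h, not_false_eq_true, if_true]; exact int_sq (hD s hs) h
  have h1 := AC U r d P hP R hR hX (fun s => D s ≠ 0) (le_trans (by gcongr; exact le_trans (le_of_eq (Sm_congr fun s _ => by congr)) hc) hA)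
  have e1 : Sm U r (fun s => if D s ≠ 0 then P s ^ 2 else 0) = Sm U r (fun s => D s ^ 2) := by
    apply Sm_congr; intro s hs; rw [← hDP s hs]
    by_cases h : D s = 0 <;> simp [h]
  have e2 : Sm U r (fun s => P s ^ 2) = Sm U r (fun s => D s ^ 2) := by
    apply Sm_congr; intro s hs; rw [← hDP s hs]
  have h1' : Sm U r (fun s => if D s ≠ 0 then P s ^ 2 else 0) ≤ Sm U r (fun s => P s ^ 2) / 16 := by convert h1
  rw [e1, e2] at h1'
  have hS0 : 0 ≤ Sm U r (fun s => D s ^ 2) := Sm_nonneg fun _ _ => sq_nonneg _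
  have hS : Sm U r (fun s => D s ^ 2) = 0 := by linarith
  intro s hs
  have := (Finset.sum_eq_zero_iff_of_nonneg (fun _ _ => sq_nonneg _)).1 hS s hs
  simpa using this
end KS

set_option linter.unusedSectionVars false
set_option linter.unusedVariables false
namespace KS
variable {ι : Type*} [DecidableEq ι]

lemma AN_slice {U : Finset ι} {r : ℕ} {s t : Finset ι} (hs : s ∈ powersetCard r U) (ht : t ∈ powersetCard r U) :
    AN t s = if t = s then 1 else 0 := by
  rw [mem_powersetCard] at hs ht
  unfold AN
  by_cases h : t = s
  · simp [h]
  · have : ¬ t ⊆ s := fun hh => h (eq_of_subset_of_card_le hh (by omega))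
    simp [h, this]

lemma triv1 (U : Finset ι) (r K : ℕ) (h : r < K) (F : Finset ι → ℝ) :
    ∃ P ∈ PS K, ∀ s ∈ powersetCard r U, F s = P s := by
  refine ⟨∑ t ∈ powersetCard r U, F t • AN t, ?_, ?_⟩
  · apply Submodule.sum_mem; intro t ht
    apply Submodule.smul_mem; apply AN_mem
    rw [mem_powersetCard] at ht; omega
  · intro s hs
    rw [Finset.sum_apply, Finset.sum_eq_single s]
    · simp [AN]
    · intro t ht hts
      simp [AN_slice hs ht, hts]
    · intro h; exact absurd hs h

lemma PS_disj (T : Finset ι) : (fun s => if Disjoint T s then (1:ℝ) else 0) ∈ PS (T.card + 1) := by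
  induction T using Finset.induction_on with
  | empty => simp only [disjoint_empty_left, if_true]; exact PS_const _ _
  | insert a T ha ih =>
    have h1 : (fun s => 1 - AN {a} s) ∈ PS (1 + 1) :=
      Submodule.sub_mem _ (PS_const 1 1) (AN_mem _ (by simp))
    have h2 := PS_mul h1 ih
    rw [card_insert_of_notMem ha, add_comm T.card 1]
    have e : (fun s => if Disjoint (insert a T) s then (1:ℝ) else 0) = fun s => (1 - AN {a} s) * if Disjoint T s then 1 else 0 := by
      ext s
      by_cases h : a ∈ s <;> simp [h, disjoint_insert_left, AN, singleton_subset_iff]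
    rw [e]; exact h2

lemma PS_compl (U : Finset ι) (K : ℕ) {P : Finset ι → ℝ} (hP : P ∈ PS K) :
    ∃ Q ∈ PS K, ∀ s ⊆ U, P (U \ s) = Q s := by
  unfold PS at hP
  induction hP using Submodule.span_induction with
  | mem x hx =>
    obtain ⟨T, hT, rfl⟩ := hx
    by_cases hTU : T ⊆ U
    · refine ⟨_, PS_mono (by omega : T.card + 1 ≤ K) (PS_disj T), fun s hs => ?_⟩
      unfold AN
      by_cases h : Disjoint T s <;> simp [subset_sdiff, hTU, h]
    · refine ⟨0, Submodule.zero_mem _, fun s hs => ?_⟩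
      unfold AN; rw [if_neg]; · rfl
      exact fun h => hTU (h.trans sdiff_subset)
  | zero => exact ⟨0, Submodule.zero_mem _, fun s hs => by simp⟩
  | add x y _ _ hx hy =>
    obtain ⟨P, hP, h1⟩ := hx; obtain ⟨Q, hQ, h2⟩ := hy
    exact ⟨P + Q, Submodule.add_mem _ hP hQ, fun s hs => by simp [h1 s hs, h2 s hs]⟩
  | smul a x _ hx =>
    obtain ⟨P, hP, h1⟩ := hx
    exact ⟨a • P, Submodule.smul_mem _ _ hP, fun s hs => by simp [h1 s hs]⟩

lemma compl_mem {U : Finset ι} {r : ℕ} {s : Finset ι} (hs : s ∈ powersetCard r U) :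
    U \ s ∈ powersetCard (U.card - r) U := by
  rw [mem_powersetCard] at hs ⊢
  exact ⟨sdiff_subset, by rw [card_sdiff_of_subset hs.1, hs.2]⟩

lemma compl_mem' {U : Finset ι} {r : ℕ} (hr : r ≤ U.card) {s : Finset ι} (hs : s ∈ powersetCard (U.card - r) U) :
    U \ s ∈ powersetCard r U := by
  have := compl_mem hs
  rwa [Nat.sub_sub_self hr] at this

lemma compl_compl {U : Finset ι} {r : ℕ} {s : Finset ι} (hs : s ∈ powersetCard r U) : U \ (U \ s) = s := by
  rw [mem_powersetCard] at hs
  exact Finset.sdiff_sdiff_eq_self hs.1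

lemma Sm_compl (U : Finset ι) (r : ℕ) (hr : r ≤ U.card) (F : Finset ι → ℝ) :
    Sm U (U.card - r) (fun s => F (U \ s)) = Sm U r F := by
  unfold Sm
  exact Finset.sum_nbij' (fun s => U \ s) (fun s => U \ s) (fun s hs => compl_mem' hr hs) (fun s hs => compl_mem hs)
    (fun s hs => compl_compl hs) (fun s hs => compl_compl hs) (fun s _ => rfl)

lemma triv2 (U : Finset ι) (r K : ℕ) (h : U.card < K + r) (F : Finset ι → ℝ) :
    ∃ P ∈ PS K, ∀ s ∈ powersetCard r U, F s = P s := by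
  rcases lt_or_ge U.card r with h1 | h1
  · exact ⟨0, Submodule.zero_mem _, fun s hs => by rw [powersetCard_eq_empty.2 h1] at hs; simp at hs⟩
  obtain ⟨P, hP, hh⟩ := triv1 U (U.card - r) K (by omega) (fun s => F (U \ s))
  obtain ⟨Q, hQ, h2⟩ := PS_compl U K hP
  refine ⟨Q, hQ, fun s hs => ?_⟩
  have h3 := hh _ (compl_mem hs)
  rw [compl_compl hs] at h3
  rw [h3, h2 s (mem_powersetCard.1 hs).1]

lemma lift_M {d : ℕ} {i j : ι} (hij : i ≠ j) {H : Finset ι → ℝ} (hH : H ∈ PS d) :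
    ∃ M ∈ PS (d+1), ∀ s : Finset ι, (i ∈ s → j ∉ s → M s = H (s.erase i)) ∧ (i ∉ s → j ∈ s → M s = - H (s.erase j))
      ∧ ((i ∈ s ↔ j ∈ s) → M s = 0) := by
  unfold PS at hH
  induction hH using Submodule.span_induction with
  | mem x hx =>
    obtain ⟨T, hT, rfl⟩ := hx
    by_cases h : i ∈ T ∨ j ∈ T
    · refine ⟨0, Submodule.zero_mem _, fun s => ⟨fun h1 h2 => ?_, fun h1 h2 => ?_, fun h1 => rfl⟩⟩
      · unfold AN; rw [if_neg]; · rfl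
        intro hs
        rcases h with h | h
        · simpa using hs h
        · exact h2 (mem_of_mem_erase (hs h))
      · unfold AN; rw [if_neg]; · simp
        intro hs
        rcases h with h | h
        · exact h1 (mem_of_mem_erase (hs h))
        · simpa using hs h
    · push Not at h
      refine ⟨AN (insert i T) - AN (insert j T), Submodule.sub_mem _ (AN_mem _ (by rw [card_insert_of_notMem h.1]; omega)) (AN_mem _ (by rw [card_insert_of_notMem h.2]; omega)), fun s => ⟨fun h1 h2 => ?_, fun h1 h2 => ?_, fun h1 => ?_⟩⟩
      · simp [AN, insert_subset_iff, h1, h2, subset_erase, h.1]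
      · simp [AN, insert_subset_iff, h1, h2, subset_erase, h.2]
      · simp [AN, insert_subset_iff, h1]
  | zero => exact ⟨0, Submodule.zero_mem _, fun s => by simp⟩
  | add x y _ _ hx hy =>
    obtain ⟨P, hP, h1⟩ := hx; obtain ⟨Q, hQ, h2⟩ := hy
    refine ⟨P + Q, Submodule.add_mem _ hP hQ, fun s => ?_⟩
    obtain ⟨a1, a2, a3⟩ := h1 s
    obtain ⟨b1, b2, b3⟩ := h2 s
    refine ⟨fun u v => ?_, fun u v => ?_, fun u => ?_⟩
    · simp [a1 u v, b1 u v]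
    · simp [a2 u v, b2 u v]; ring
    · simp [a3 u, b3 u]
  | smul a x _ hx =>
    obtain ⟨P, hP, h1⟩ := hx
    refine ⟨a • P, Submodule.smul_mem _ _ hP, fun s => ?_⟩
    obtain ⟨a1, a2, a3⟩ := h1 s
    refine ⟨fun u v => ?_, fun u v => ?_, fun u => ?_⟩
    · simp [a1 u v]
    · simp [a2 u v]
    · simp [a3 u]

lemma sw_three (i a c : ι) (hic : i ≠ c) (hac : a ≠ c) (s : Finset ι) :
    sw i a (sw i c (sw i a s)) = sw a c s := by
  ext x
  simp only [mem_sw]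
  have h : Equiv.swap i a * Equiv.swap i c * Equiv.swap i a = Equiv.swap a c := by
    rw [Equiv.swap_comm i c, Equiv.swap_mul_swap_mul_swap hic.symm hac.symm]
  rw [← h]; rfl

lemma const_of_inv (U : Finset ι) (r : ℕ) (i : ι) (hi : i ∈ U) (R : Finset ι → ℝ)
    (h : ∀ j ∈ U.erase i, ∀ s ∈ powersetCard r U, R (sw i j s) = R s) :
    ∃ c, ∀ s ∈ powersetCard r U, R s = c := by
  have hi' : ∀ j ∈ U, ∀ s ∈ powersetCard r U, R (sw i j s) = R s := by
    intro j hj s hs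
    by_cases hji : j = i
    · subst hji; rw [sw_eq_self _ _ _ Iff.rfl]
    · exact h j (by simp [hj, hji]) s hs
  have hall : ∀ a ∈ U, ∀ c ∈ U, ∀ s ∈ powersetCard r U, R (sw a c s) = R s := by
    intro a ha c hc s hs
    by_cases h1 : c = i
    · subst h1; rw [sw_comm]; exact hi' a ha s hs
    by_cases h2 : a = c
    · subst h2; rw [sw_eq_self _ _ _ Iff.rfl]
    rw [← sw_three i a c (Ne.symm h1) h2, hi' a ha _ (sw_mem hi hc (sw_mem hi ha hs)), hi' c hc _ (sw_mem hi ha hs), hi' a ha s hs]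
  have main : ∀ m : ℕ, ∀ s ∈ powersetCard r U, ∀ t ∈ powersetCard r U, (s \ t).card = m → R s = R t := by
    intro m
    induction m with
    | zero =>
      intro s hs t ht hm
      rw [card_eq_zero, sdiff_eq_empty_iff_subset] at hm
      rw [mem_powersetCard] at hs ht
      rw [eq_of_subset_of_card_le hm (by omega)]
    | succ m ih =>
      intro s hs t ht hm
      have hs' := mem_powersetCard.1 hs
      have ht' := mem_powersetCard.1 ht
      obtain ⟨a, ha⟩ : (s \ t).Nonempty := by rw [← card_pos]; omega
      obtain ⟨c, hc⟩ : (t \ s).Nonempty := by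
        rw [← card_pos]
        have := card_sdiff_add_card_inter s t
        have h2 := card_sdiff_add_card_inter t s
        rw [inter_comm t s] at h2
        omega
      rw [mem_sdiff] at ha hc
      rw [← hall a (hs'.1 ha.1) c (ht'.1 hc.1) s hs]
      apply ih _ (sw_mem (hs'.1 ha.1) (ht'.1 hc.1) hs) t ht
      have : sw a c s \ t = (s \ t).erase a := by
        rw [sw_eq_ins a c s ha.1 hc.2]
        ext x; simp only [mem_sdiff, mem_insert, mem_erase]
        constructor
        · rintro ⟨rfl | ⟨h1, h2⟩, h3⟩
          · exact absurd hc.1 h3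
          · exact ⟨h1, h2, h3⟩
        · rintro ⟨h1, h2, h3⟩; exact ⟨Or.inr ⟨h1, h2⟩, h3⟩
      rw [this, card_erase_of_mem (mem_sdiff.2 ha), hm]; rfl
  rcases (powersetCard r U).eq_empty_or_nonempty with he | ⟨t, ht⟩
  · exact ⟨0, by simp [he]⟩
  · exact ⟨R t, fun s hs => main _ s hs t ht rfl⟩

lemma degree_lemma (U : Finset ι) (r d : ℕ) (i : ι) (hi : i ∈ U) (G' : Finset ι → ℝ)
    (h : ∀ j ∈ U.erase i, ∃ H ∈ PS d, ∀ t ∈ powersetCard r ((U.erase i).erase j), G' (insert i t) - G' (insert j t) = H t) :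
    ∃ G ∈ PS (d+1), ∀ s ∈ powersetCard (r+1) U, G' s = G s := by
  obtain ⟨P, hP, horth⟩ := exists_proj U (r+1) (d+1) G'
  obtain ⟨R, hR⟩ : ∃ R : Finset ι → ℝ, ∀ s, R s = G' s - P s := ⟨_, fun _ => rfl⟩
  simp only [← hR] at horth
  obtain ⟨c, hc⟩ := const_of_inv U (r+1) i hi R (by
    intro j hj
    have hjU : j ∈ U := mem_of_mem_erase hj
    have hij : i ≠ j := fun e => by simp [e] at hj
    obtain ⟨H, hH, hHt⟩ := h j hj
    obtain ⟨M, hM, hMs⟩ := lift_M hij hH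
    have hGM : ∀ s ∈ powersetCard (r+1) U, G' s - G' (sw i j s) = M s := by
      intro s hs
      rw [mem_powersetCard] at hs
      obtain ⟨a1, a2, a3⟩ := hMs s
      by_cases h1 : i ∈ s <;> by_cases h2 : j ∈ s
      · rw [sw_eq_self _ _ _ (by simp [h1, h2]), a3 (by simp [h1, h2])]; ring
      · rw [a1 h1 h2, ← hHt, insert_erase h1, sw_eq_ins _ _ _ h1 h2]
        rw [mem_powersetCard]
        refine ⟨fun x hx => ?_, by rw [card_erase_of_mem h1, hs.2]; rfl⟩
        rw [mem_erase] at hx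
        simp only [mem_erase]
        exact ⟨fun e => h2 (e ▸ hx.2), hx.1, hs.1 hx.2⟩
      · rw [a2 h1 h2, ← hHt, insert_erase h2, sw_comm, sw_eq_ins _ _ _ h2 h1]
        · ring
        rw [mem_powersetCard]
        refine ⟨fun x hx => ?_, by rw [card_erase_of_mem h2, hs.2]; rfl⟩
        rw [mem_erase] at hx
        simp only [mem_erase]
        exact ⟨hx.1, fun e => h1 (e ▸ hx.2), hs.1 hx.2⟩
      · rw [sw_eq_self _ _ _ (by simp [h1, h2]), a3 (by simp [h1, h2])]; ring
    have hQ : (fun s => M s - (P s - P (sw i j s))) ∈ PS (d+1) :=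
      Submodule.sub_mem _ hM (Submodule.sub_mem _ hP (PS_sw i j hP))
    have h0 := horth _ hQ
    have h1 : Sm U (r+1) (fun s => R s * (R s - R (sw i j s))) = 0 := by
      rw [← h0]; apply Sm_congr; intro s hs
      simp only [← hGM s hs, hR]; ring
    have h2 := Sm_sw (r := r+1) hi hjU (fun s => R s * (R s - R (sw i j s)))
    simp only [sw_sw] at h2
    have h3 : Sm U (r+1) (fun s => (R s - R (sw i j s)) ^ 2) = 0 := by
      have : (fun s => (R s - R (sw i j s)) ^ 2) = fun s => R s * (R s - R (sw i j s)) + R (sw i j s) * (R (sw i j s) - R s) := by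
        ext s; ring
      rw [this, Sm_add, h2, h1]; ring
    intro s hs
    have := (Finset.sum_eq_zero_iff_of_nonneg (fun _ _ => sq_nonneg _)).1 h3 s hs
    have := pow_eq_zero_iff (two_ne_zero) |>.1 this
    linarith)
  refine ⟨fun s => P s + c, Submodule.add_mem _ hP (PS_const d c), fun s hs => ?_⟩
  simp only [← hc s hs, hR]; ring
end KS

set_option linter.unusedSectionVars false
set_option linter.unusedVariables false
namespace KS
variable {ι : Type*} [DecidableEq ι]

def ClaimAt (K : ℕ) (U : Finset ι) (r : ℕ) : Prop :=
  ∀ (R ε : ℝ) (F q : Finset ι → ℝ), 4 ≤ R →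
    (K ≤ r → K + r ≤ U.card → (U.card : ℝ) ≤ R * r ∧ (U.card : ℝ) ≤ R * ((U.card : ℝ) - r)) →
    ε * R ^ (1000 * K) ≤ 1 → IntV U r F → q ∈ PS K →
    Sm U r (fun s => (F s - q s) ^ 2) ≤ ε * (U.card.choose r : ℝ) →
    ∃ G ∈ PS K, IntV U r G ∧ Sm U r (fun s => (F s - G s) ^ 2) ≤ 2 * (ε * (U.card.choose r : ℝ))

lemma Sm_erase_le (U : Finset ι) (r : ℕ) (i : ι) (f : Finset ι → ℝ) (hf : ∀ s, 0 ≤ f s) :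
    Sm (U.erase i) r f ≤ Sm U r f :=
  Finset.sum_le_sum_of_subset_of_nonneg (powersetCard_mono (erase_subset _ _)) fun _ _ _ => hf _

lemma Sm_ins_le (U : Finset ι) (r : ℕ) (i : ι) (hi : i ∈ U) (f : Finset ι → ℝ) (hf : ∀ s, 0 ≤ f s) :
    Sm (U.erase i) r (fun t => f (insert i t)) ≤ Sm U (r+1) f := by
  rw [Sm_split hi]
  linarith [Sm_nonneg (U := U.erase i) (r := r+1) (f := f) fun s _ => hf s]

lemma ins_mem {U : Finset ι} {r : ℕ} {i : ι} (hi : i ∈ U) {t : Finset ι} (ht : t ∈ powersetCard r (U.erase i)) :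
    insert i t ∈ powersetCard (r+1) U := by
  rw [mem_powersetCard] at ht ⊢
  have : i ∉ t := fun h => by simpa using ht.1 h
  exact ⟨insert_subset hi (ht.1.trans (erase_subset _ _)), by rw [card_insert_of_notMem this, ht.2]⟩

lemma mem_erase_mono {U : Finset ι} {r : ℕ} {i : ι} {t : Finset ι} (ht : t ∈ powersetCard r (U.erase i)) :
    t ∈ powersetCard r U := powersetCard_mono (erase_subset _ _) ht

lemma diff_deg {d : ℕ} {i j : ι} (hij : i ≠ j) {P : Finset ι → ℝ} (hP : P ∈ PS (d+1)) :
    ∃ H ∈ PS d, ∀ t : Finset ι, i ∉ t → j ∉ t → P (insert i t) - P (insert j t) = H t := by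
  unfold PS at hP
  induction hP using Submodule.span_induction with
  | mem x hx =>
    obtain ⟨T, hT, rfl⟩ := hx
    simp only [AN_insert]
    have hz : ∀ (a : ι) (S t : Finset ι), a ∈ S → a ∉ t → AN S t = 0 := by
      intro a S t h1 h2; unfold AN; rw [if_neg]; exact fun h => h2 (h h1)
    by_cases hi : i ∈ T <;> by_cases hj : j ∈ T
    · refine ⟨0, Submodule.zero_mem _, fun t h1 h2 => ?_⟩
      rw [hz j _ t (by simp [hj, hij.symm]) h2, hz i _ t (by simp [hi, hij]) h1]; simp
    · refine ⟨AN (T.erase i), AN_mem _ (by have := card_erase_add_one hi; omega), fun t h1 h2 => ?_⟩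
      rw [hz i (T.erase j) t (by simp [hi, hij]) h1]; simp
    · refine ⟨-AN (T.erase j), Submodule.neg_mem _ (AN_mem _ (by have := card_erase_add_one hj; omega)), fun t h1 h2 => ?_⟩
      rw [hz j (T.erase i) t (by simp [hj, hij.symm]) h2]; simp
    · refine ⟨0, Submodule.zero_mem _, fun t h1 h2 => ?_⟩
      rw [erase_eq_of_notMem hi, erase_eq_of_notMem hj]; simp
  | zero => exact ⟨0, Submodule.zero_mem _, fun s _ _ => by simp⟩
  | add x y _ _ hx hy =>
    obtain ⟨P, hP, h1⟩ := hx; obtain ⟨Q, hQ, h2⟩ := hy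
    refine ⟨P + Q, Submodule.add_mem _ hP hQ, fun s u v => ?_⟩
    simp only [Pi.add_apply, ← h1 s u v, ← h2 s u v]; ring
  | smul a x _ hx =>
    obtain ⟨P, hP, h1⟩ := hx
    refine ⟨a • P, Submodule.smul_mem _ _ hP, fun s u v => ?_⟩
    simp only [Pi.smul_apply, smul_eq_mul, ← h1 s u v]; ring

lemma bootstrap (U : Finset ι) (r d : ℕ) (R E : ℝ) (F q G : Finset ι → ℝ) (hR : 4 ≤ R)
    (hX : 0 < r → r < U.card → (U.card : ℝ) ≤ 3 * R * r ∧ (U.card : ℝ) ≤ 3 * R * ((U.card : ℝ) - r))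
    (hF : IntV U r F) (hG : IntV U r G) (hq : q ∈ PS (d+1)) (hGP : G ∈ PS (d+1))
    (hE : Sm U r (fun s => (F s - q s) ^ 2) ≤ E)
    (hsm : Sm U r (fun s => (F s - G s) ^ 2) * R ^ (512 * d + 12) ≤ U.card.choose r) :
    Sm U r (fun s => (F s - G s) ^ 2) ≤ 2 * E := by
  obtain ⟨A, hA⟩ : ∃ A : Finset ι → Prop, ∀ s, A s ↔ F s - G s ≠ 0 := ⟨_, fun _ => Iff.rfl⟩
  have hc : Sm U r (fun s => if A s then (1:ℝ) else 0) ≤ Sm U r (fun s => (F s - G s) ^ 2) := by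
    apply Sm_mono; intro s hs
    by_cases h : A s
    · simp only [h, if_true]
      apply int_sq _ ((hA s).1 h)
      obtain ⟨a, ha⟩ := hF s hs
      obtain ⟨b, hb⟩ := hG s hs
      exact ⟨a - b, by rw [ha, hb]; push_cast; ring⟩
    · simp only [h, if_false]; positivity
  have h1 := AC U r d (fun s => q s - G s) (Submodule.sub_mem _ hq hGP) R hR hX A (le_trans (by gcongr) hsm)
  have h2 : Sm U r (fun s => (q s - G s) ^ 2) = Sm U r (fun s => if A s then (q s - G s) ^ 2 else 0)
      + Sm U r (fun s => if A s then 0 else (F s - q s) ^ 2) := by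
    rw [← Sm_add]; apply Sm_congr; intro s hs
    by_cases h : A s
    · simp [h]
    · have : F s - G s = 0 := by by_contra h'; exact h ((hA s).2 h')
      simp only [h, if_false]
      rw [show F s = G s by linarith]; ring
  have h3 : Sm U r (fun s => (F s - q s) ^ 2) = Sm U r (fun s => if A s then (F s - q s) ^ 2 else 0)
      + Sm U r (fun s => if A s then 0 else (F s - q s) ^ 2) := by
    rw [← Sm_add]; apply Sm_congr; intro s hs
    by_cases h : A s <;> simp [h]
  have h4 : Sm U r (fun s => (F s - G s) ^ 2) ≤ 2 * Sm U r (fun s => if A s then (F s - q s) ^ 2 else 0)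
      + 2 * Sm U r (fun s => if A s then (q s - G s) ^ 2 else 0) := by
    rw [← Sm_mul, ← Sm_mul, ← Sm_add]; apply Sm_mono; intro s hs
    by_cases h : A s
    · simp only [h, if_true]; nlinarith [sq_nonneg ((F s - q s) - (q s - G s))]
    · have : F s - G s = 0 := by by_contra h'; exact h ((hA s).2 h')
      simp [h, this]
  have n2 : 0 ≤ Sm U r (fun s => if A s then 0 else (F s - q s) ^ 2) := Sm_nonneg fun s _ => by split_ifs <;> positivity
  linarith

lemma pick_i (U : Finset ι) (r : ℕ) (hr : r < U.card) (ε : ℝ) (e : Finset ι → ℝ)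
    (he : Sm U r e ≤ ε * (U.card.choose r : ℝ)) :
    ∃ i ∈ U, Sm (U.erase i) r e ≤ ε * ((U.card - 1).choose r : ℝ) := by
  apply Finset.exists_le_of_sum_le (card_pos.1 (by omega))
  rw [sum_out, Finset.sum_const, nsmul_eq_mul]
  obtain ⟨n, hn⟩ : ∃ n, U.card = n + 1 := ⟨U.card - 1, by omega⟩
  rw [hn] at he ⊢
  have h1 : ((n+1).choose r : ℝ) * ((n:ℝ) + 1 - r) = (n + 1) * n.choose r := by
    have := Nat.add_one_mul_choose_eq n r
    have h3 := Nat.choose_mul_succ_eq n r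
    have h4 : ((n + 1 - r : ℕ) : ℝ) = n + 1 - r := by rw [Nat.cast_sub (by omega)]; push_cast; ring
    rw [← h4]
    have : (n.choose r : ℝ) * ((n:ℝ)+1) = ((n+1).choose r) * ((n+1-r : ℕ):ℝ) := by exact_mod_cast h3
    linarith
  have h2 : (0:ℝ) ≤ (n:ℝ) + 1 - r := by
    have : (r:ℝ) ≤ n + 1 := by exact_mod_cast (by omega : r ≤ n + 1)
    linarith
  push_cast
  calc ((n:ℝ) + 1 - r) * Sm U r e ≤ ((n:ℝ) + 1 - r) * (ε * ((n+1).choose r : ℝ)) := mul_le_mul_of_nonneg_left he h2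
    _ = ε * (((n+1).choose r : ℝ) * ((n:ℝ) + 1 - r)) := by ring
    _ = _ := by rw [h1]; ring

/-- binomial comparison: level two down -/
lemma choose_two (n ρ : ℕ) (R : ℝ) (hR : 4 ≤ R) (h : ρ + 1 ≤ n + 1) (h1 : ((n:ℝ) + 2) ≤ R * (ρ + 1)) (h2 : ((n:ℝ)+2) ≤ R * ((n:ℝ) + 1 - ρ)) :
    ((n+2).choose (ρ+1) : ℝ) ≤ R ^ 2 * (n.choose ρ : ℝ) := by
  have a1 : ((n:ℝ)+2) * ((n+1).choose ρ : ℝ) = ((n+2).choose (ρ+1) : ℝ) * (ρ + 1) := by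
    have := Nat.add_one_mul_choose_eq (n+1) ρ
    have h := congrArg (Nat.cast : ℕ → ℝ) this
    push_cast at h; linarith
  have a2 : (n.choose ρ : ℝ) * ((n:ℝ)+1) = ((n+1).choose ρ) * ((n:ℝ)+1-ρ) := by
    have h3 := Nat.choose_mul_succ_eq n ρ
    have h4 : ((n + 1 - ρ : ℕ) : ℝ) = n + 1 - ρ := by rw [Nat.cast_sub (by omega)]; push_cast; ring
    rw [← h4]; exact_mod_cast h3
  have hN : (0:ℝ) ≤ ((n+2).choose (ρ+1) : ℝ) := by positivity
  have hN1 : (0:ℝ) ≤ ((n+1).choose ρ : ℝ) := by positivity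
  have hN2 : (0:ℝ) ≤ (n.choose ρ : ℝ) := by positivity
  have hn : (0:ℝ) < (n:ℝ) + 2 := by positivity
  -- N (n+2) ≤ R N (ρ+1) = R (n+2) C1
  have b1 : ((n+2).choose (ρ+1) : ℝ) ≤ R * ((n+1).choose ρ : ℝ) := by
    refine le_of_mul_le_mul_right ?_ hn
    nlinarith [mul_le_mul_of_nonneg_left h1 hN]
  have b2 : ((n+1).choose ρ : ℝ) ≤ R * (n.choose ρ : ℝ) := by
    refine le_of_mul_le_mul_right ?_ hn
    have hx : R * (n.choose ρ : ℝ) * ((n:ℝ)+1) ≤ R * (n.choose ρ : ℝ) * ((n:ℝ)+2) := by gcongr; linarith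
    nlinarith [mul_le_mul_of_nonneg_left h2 hN1]
  nlinarith

lemma choose_three (n ρ : ℕ) (h : 2 * (ρ + 1) ≤ n + 3) : ((n+1).choose ρ : ℝ) ≤ 2 * (n.choose ρ : ℝ) := by
  have a2 : (n.choose ρ : ℝ) * ((n:ℝ)+1) = ((n+1).choose ρ) * ((n:ℝ)+1-ρ) := by
    have h3 := Nat.choose_mul_succ_eq n ρ
    have h4 : ((n + 1 - ρ : ℕ) : ℝ) = n + 1 - ρ := by rw [Nat.cast_sub (by omega)]; push_cast; ring
    rw [← h4]; exact_mod_cast h3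
  have hN1 : (0:ℝ) ≤ ((n+1).choose ρ : ℝ) := by positivity
  have hρ : 2 * ((ρ:ℝ) + 1) ≤ n + 3 := by exact_mod_cast h
  have hn : (0:ℝ) < (n:ℝ) + 1 := by positivity
  refine le_of_mul_le_mul_right ?_ hn
  nlinarith

lemma pow_aux (d : ℕ) (hd : 1 ≤ d) (R : ℝ) (hR : 4 ≤ R) :
    2 * R ^ 2 * (R * (1 + 1 / (d:ℝ))) ^ (1000 * d) ≤ R ^ (1000 * (d + 1)) := by
  have hd0 : (0:ℝ) < d := by exact_mod_cast hd
  have h1 : (1 + 1 / (d:ℝ)) ^ d ≤ 3 := by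
    have a : 1 + 1 / (d:ℝ) ≤ Real.exp (1 / d) := by linarith [Real.add_one_le_exp (1 / (d:ℝ))]
    have b : (1 + 1 / (d:ℝ)) ^ d ≤ Real.exp (1 / d) ^ d := pow_le_pow_left₀ (by positivity) a d
    rw [← Real.exp_nat_mul, mul_one_div_cancel hd0.ne'] at b
    linarith [Real.exp_one_lt_d9]
  have h2 : ((1 + 1 / (d:ℝ)) ^ (1000 * d)) ≤ 4 ^ 800 := by
    rw [mul_comm, pow_mul]
    calc ((1 + 1 / (d:ℝ)) ^ d) ^ 1000 ≤ 3 ^ 1000 := pow_le_pow_left₀ (by positivity) h1 _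
      _ = (3 ^ 5) ^ 200 := by rw [← pow_mul]
      _ ≤ (4 ^ 4) ^ 200 := pow_le_pow_left₀ (by positivity) (by norm_num) _
      _ = 4 ^ 800 := by rw [← pow_mul]
  have h3 : (4:ℝ) ^ 800 ≤ R ^ 800 := pow_le_pow_left₀ (by norm_num) hR _
  have h4 : 2 ≤ R ^ 198 := by
    calc (2:ℝ) ≤ R := by linarith
      _ = R ^ 1 := by ring
      _ ≤ R ^ 198 := pow_le_pow_right₀ (by linarith) (by norm_num)
  rw [mul_pow]
  have hR0 : 0 < R := by linarith
  calc 2 * R ^ 2 * (R ^ (1000 * d) * (1 + 1 / (d:ℝ)) ^ (1000 * d))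
      ≤ R ^ 198 * R ^ 2 * (R ^ (1000 * d) * R ^ 800) := by
        gcongr; exact h2.trans h3
    _ = R ^ (1000 * (d+1)) := by
        have e : 1000 * (d + 1) = 198 + 2 + (1000 * d + 800) := by omega
        rw [e, pow_add R (198+2), pow_add R 198, pow_add R (1000*d)]
end KS

set_option linter.unusedSectionVars false
set_option linter.unusedVariables false
namespace KS
variable {ι : Type*} [DecidableEq ι]

lemma get_H (U : Finset ι) (n ρ d : ℕ) (i j : ι) (hi : i ∈ U) (hj : j ∈ U.erase i) (hU : U.card = n + 2)
    (hdn : d + 1 + (ρ + 1) ≤ n + 2) (R ε : ℝ) (hR : 4 ≤ R) (hε : 0 ≤ ε)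
    (h1 : ((n:ℝ) + 2) ≤ R * (ρ + 1)) (h2 : ((n:ℝ)+2) ≤ R * ((n:ℝ) + 1 - ρ))
    (hsm : ε * R ^ (1000 * (d+1)) ≤ 1) (hC : ClaimAt d ((U.erase i).erase j) ρ)
    (F q : Finset ι → ℝ) (hF : IntV U (ρ+1) F) (hq : q ∈ PS (d+1)) (E : ℝ) (hE : E = ε * ((n+2).choose (ρ+1) : ℝ))
    (he : Sm U (ρ+1) (fun s => (F s - q s) ^ 2) ≤ E) :
    ∃ H ∈ PS d, IntV ((U.erase i).erase j) ρ H ∧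
      Sm ((U.erase i).erase j) ρ (fun t => (F (insert i t) - F (insert j t) - H t) ^ 2) ≤ 4 * R ^ 2 * E := by
  have hjU : j ∈ U := mem_of_mem_erase hj
  have hij : i ≠ j := fun e => by simp [e] at hj
  have hV : ((U.erase i).erase j).card = n := by
    rw [card_erase_of_mem hj, card_erase_of_mem hi, hU]; rfl
  obtain ⟨qj, hqj, hqe⟩ := diff_deg hij hq
  have hE0 : 0 ≤ E := by rw [hE]; positivity
  have hmem : ∀ t ∈ powersetCard ρ ((U.erase i).erase j), i ∉ t ∧ j ∉ t := by
    intro t ht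
    rw [mem_powersetCard] at ht
    exact ⟨fun h => by simpa using ht.1 h, fun h => by simpa using ht.1 h⟩
  have herr : Sm ((U.erase i).erase j) ρ (fun t => (F (insert i t) - F (insert j t) - qj t) ^ 2) ≤ 2 * E := by
    have a1 : Sm ((U.erase i).erase j) ρ (fun t => (F (insert i t) - F (insert j t) - qj t) ^ 2)
        ≤ 2 * Sm ((U.erase i).erase j) ρ (fun t => (F (insert i t) - q (insert i t)) ^ 2)
          + 2 * Sm ((U.erase i).erase j) ρ (fun t => (F (insert j t) - q (insert j t)) ^ 2) := by
      rw [← Sm_mul, ← Sm_mul, ← Sm_add]; apply Sm_mono; intro t ht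
      obtain ⟨u, v⟩ := hmem t ht
      rw [← hqe t u v]
      nlinarith [sq_nonneg ((F (insert i t) - q (insert i t)) + (F (insert j t) - q (insert j t)))]
    have a2 := Sm_split hi (r := ρ) (fun s => (F s - q s) ^ 2)
    have a3 := Sm_ins_le (U.erase i) ρ j hj (fun s => (F s - q s) ^ 2) (fun _ => sq_nonneg _)
    have a4 := Sm_erase_le (U.erase i) ρ j (fun t => (F (insert i t) - q (insert i t)) ^ 2) (fun _ => sq_nonneg _)
    linarith
  rcases Nat.eq_zero_or_pos d with rfl | hd
  · refine ⟨0, Submodule.zero_mem _, fun s _ => ⟨0, by simp⟩, ?_⟩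
    have : qj = 0 := PS_zero hqj
    rw [this] at herr
    refine herr.trans ?_
    nlinarith [mul_nonneg hE0 (by nlinarith : (0:ℝ) ≤ 4 * R ^ 2 - 2)]
  · have hd0 : (1:ℝ) ≤ d := by exact_mod_cast hd
    have hinv : 0 < 1 / (d:ℝ) := by positivity
    have hch := choose_two n ρ R hR (by omega) h1 h2
    obtain ⟨H, hH, hHi, hHe⟩ := hC (R * (1 + 1 / (d:ℝ))) (2 * R ^ 2 * ε) (fun t => F (insert i t) - F (insert j t)) qj
      (by nlinarith) (by
        intro hdρ hdn'
        rw [hV] at hdn' ⊢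
        have e1 : (ρ:ℝ) + 1 ≤ (1 + 1 / (d:ℝ)) * ρ := by
          have : (d:ℝ) ≤ ρ := by exact_mod_cast hdρ
          have : 1 ≤ 1 / (d:ℝ) * ρ := by rw [div_mul_eq_mul_div, one_mul, le_div_iff₀ (by linarith)]; linarith
          linarith
        have e2 : (n:ℝ) + 1 - ρ ≤ (1 + 1 / (d:ℝ)) * (n - ρ) := by
          have : (d:ℝ) + ρ ≤ n := by exact_mod_cast hdn'
          have : 1 ≤ 1 / (d:ℝ) * (n - ρ) := by rw [div_mul_eq_mul_div, one_mul, le_div_iff₀ (by linarith)]; linarith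
          linarith
        have hR0 : 0 ≤ R := by linarith
        constructor
        · have := mul_le_mul_of_nonneg_left e1 hR0
          rw [mul_assoc]; linarith
        · have := mul_le_mul_of_nonneg_left e2 hR0
          rw [mul_assoc]; linarith)
      (by
        have := mul_le_mul_of_nonneg_left (pow_aux d hd R hR) hε
        calc _ = ε * (2 * R ^ 2 * (R * (1 + 1 / (d:ℝ))) ^ (1000 * d)) := by ring
          _ ≤ _ := this
          _ ≤ 1 := hsm)
      (by
        intro t ht
        obtain ⟨a, ha⟩ := hF (insert i t) (ins_mem hi (mem_erase_mono ht))
        obtain ⟨b, hb⟩ := hF (insert j t) (mem_erase_mono (ins_mem hj ht))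
        exact ⟨a - b, by simp only [ha, hb]; push_cast; ring⟩) hqj (by
        refine herr.trans ?_
        rw [hV, hE]
        nlinarith [mul_le_mul_of_nonneg_left hch hε])
    refine ⟨H, hH, hHi, hHe.trans ?_⟩
    rw [hV, hE]
    have : (n.choose ρ : ℝ) ≤ ((n+2).choose (ρ+1) : ℝ) := by
      have a : n.choose ρ ≤ (n+1).choose ρ := Nat.choose_le_succ n ρ
      have b : (n+2).choose (ρ+1) = (n+1).choose ρ + (n+1).choose (ρ+1) := Nat.choose_succ_succ _ _
      exact_mod_cast (by omega : n.choose ρ ≤ (n+2).choose (ρ+1))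
    have := mul_le_mul_of_nonneg_left this (by positivity : 0 ≤ 4 * R ^ 2 * ε)
    linarith

lemma consistency (U : Finset ι) (n ρ d : ℕ) (i j l : ι) (hi : i ∈ U) (hj : j ∈ U.erase i) (hl : l ∈ U.erase i)
    (hjl : j ≠ l) (hU : U.card = n + 3) (hr : 2 * (ρ + 1) ≤ n + 3)
    (R ε : ℝ) (hR : 4 ≤ R) (hε : 0 ≤ ε)
    (h1 : ((n:ℝ) + 3) ≤ R * (ρ + 1)) (h2 : ((n:ℝ)+3) ≤ R * ((n:ℝ) + 2 - ρ))
    (hsm : ε * R ^ (1000 * (d+1)) ≤ 1) (F G0 Hj Hl : Finset ι → ℝ)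
    (hG0 : G0 ∈ PS (d+1)) (hHj : Hj ∈ PS d) (hHl : Hl ∈ PS d)
    (iG : IntV (U.erase i) (ρ+1) G0) (ij : IntV ((U.erase i).erase j) ρ Hj) (il : IntV ((U.erase i).erase l) ρ Hl)
    (E : ℝ) (hE : E = ε * ((n+3).choose (ρ+1) : ℝ))
    (eG : Sm (U.erase i) (ρ+1) (fun s => (F s - G0 s) ^ 2) ≤ 2 * E)
    (ej : Sm ((U.erase i).erase j) ρ (fun t => (F (insert i t) - F (insert j t) - Hj t) ^ 2) ≤ 4 * R ^ 2 * E)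
    (el : Sm ((U.erase i).erase l) ρ (fun t => (F (insert i t) - F (insert l t) - Hl t) ^ 2) ≤ 4 * R ^ 2 * E) :
    ∀ u ∈ powersetCard ρ (((U.erase i).erase j).erase l), G0 (insert j u) + Hj u = G0 (insert l u) + Hl u := by
  have hl' : l ∈ (U.erase i).erase j := by rw [mem_erase]; exact ⟨hjl.symm, hl⟩
  have hV : (((U.erase i).erase j).erase l).card = n := by
    rw [card_erase_of_mem hl', card_erase_of_mem hj, card_erase_of_mem hi, hU]; rfl
  have hcomm : ((U.erase i).erase j).erase l = ((U.erase i).erase l).erase j := erase_right_comm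
  set V := ((U.erase i).erase j).erase l with hVdef
  have hE0 : 0 ≤ E := by rw [hE]; positivity
  have hR0 : 0 < R := by linarith
  set P : Finset ι → ℝ := fun u => (G0 (insert j u) + Hj u) - (G0 (insert l u) + Hl u) with hP
  have hPm : P ∈ PS (d+1) :=
    Submodule.sub_mem _ (Submodule.add_mem _ (PS_insert j hG0) (PS_mono (by omega) hHj))
      (Submodule.add_mem _ (PS_insert l hG0) (PS_mono (by omega) hHl))
  have m1 : ∀ u ∈ powersetCard ρ V, u ∈ powersetCard ρ ((U.erase i).erase j) := fun u hu => mem_erase_mono hu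
  have m2 : ∀ u ∈ powersetCard ρ V, u ∈ powersetCard ρ ((U.erase i).erase l) := fun u hu => by
    rw [hcomm] at hu; exact mem_erase_mono hu
  have hb : Sm V ρ (fun u => P u ^ 2) ≤ (16 + 32 * R ^ 2) * E := by
    have a1 : Sm V ρ (fun u => P u ^ 2) ≤ 4 * (Sm V ρ (fun u => (F (insert j u) - G0 (insert j u)) ^ 2)
        + Sm V ρ (fun t => (F (insert i t) - F (insert j t) - Hj t) ^ 2)
        + Sm V ρ (fun u => (F (insert l u) - G0 (insert l u)) ^ 2)
        + Sm V ρ (fun t => (F (insert i t) - F (insert l t) - Hl t) ^ 2)) := by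
      rw [← Sm_add, ← Sm_add, ← Sm_add, ← Sm_mul]; apply Sm_mono; intro u _
      simp only [hP]
      have : ∀ a b c e : ℝ, (a + b - c - e) ^ 2 ≤ 4 * (a ^ 2 + b ^ 2 + c ^ 2 + e ^ 2) := by
        intro a b c e
        nlinarith [sq_nonneg (a - b), sq_nonneg (a + c), sq_nonneg (a + e), sq_nonneg (b + c), sq_nonneg (b + e), sq_nonneg (c - e)]
      have key := this (F (insert j u) - G0 (insert j u)) (F (insert i u) - F (insert j u) - Hj u)
        (F (insert l u) - G0 (insert l u)) (F (insert i u) - F (insert l u) - Hl u)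
      exact le_trans (le_of_eq (by ring)) key
    have b1 : Sm V ρ (fun u => (F (insert j u) - G0 (insert j u)) ^ 2) ≤ 2 * E :=
      ((Sm_erase_le _ ρ l (fun u => (F (insert j u) - G0 (insert j u)) ^ 2) (fun _ => sq_nonneg _)).trans
        (Sm_ins_le _ ρ j hj (fun s => (F s - G0 s) ^ 2) (fun _ => sq_nonneg _))).trans eG
    have b2 : Sm V ρ (fun u => (F (insert l u) - G0 (insert l u)) ^ 2) ≤ 2 * E := by
      rw [hcomm]
      exact ((Sm_erase_le _ ρ j (fun u => (F (insert l u) - G0 (insert l u)) ^ 2) (fun _ => sq_nonneg _)).trans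
        (Sm_ins_le _ ρ l hl (fun s => (F s - G0 s) ^ 2) (fun _ => sq_nonneg _))).trans eG
    have b3 := (Sm_erase_le _ ρ l (fun t => (F (insert i t) - F (insert j t) - Hj t) ^ 2) (fun _ => sq_nonneg _)).trans ej
    have b4 : Sm V ρ (fun t => (F (insert i t) - F (insert l t) - Hl t) ^ 2) ≤ 4 * R ^ 2 * E := by
      rw [hcomm]
      exact (Sm_erase_le _ ρ j (fun t => (F (insert i t) - F (insert l t) - Hl t) ^ 2) (fun _ => sq_nonneg _)).trans el
    rw [← hVdef] at b3
    linarith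
  have hz := AC_zero V ρ d P P hPm R hR (by
    intro h0 h3
    rw [hV] at h3 ⊢
    have q1 : (1:ℝ) ≤ ρ := by exact_mod_cast h0
    have q2 : (ρ:ℝ) + 1 ≤ n := by exact_mod_cast h3
    constructor <;> nlinarith) (fun _ _ => rfl) (by
    intro u hu
    obtain ⟨a, ha⟩ := iG (insert j u) (ins_mem hj (m1 u hu))
    obtain ⟨b, hb⟩ := iG (insert l u) (ins_mem hl (m2 u hu))
    obtain ⟨a', ha'⟩ := ij u (m1 u hu)
    obtain ⟨b', hb'⟩ := il u (m2 u hu)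
    exact ⟨a + a' - (b + b'), by simp only [hP]; rw [ha, hb, ha', hb']; push_cast; ring⟩) (by
    rw [hV]
    have c2 := choose_two (n+1) ρ R hR (by omega) (by push_cast; linarith) (by push_cast; linarith)
    have c3 := choose_three n ρ hr
    have c4 : ((n+3).choose (ρ+1) : ℝ) ≤ R ^ 2 * (2 * n.choose ρ) := c2.trans (by gcongr)
    have c5 : (16 + 32 * R ^ 2) * R ^ 2 * 2 ≤ R ^ 8 := by
      have : (16:ℝ) ≤ R ^ 2 := by nlinarith
      have h4 : (66:ℝ) ≤ R ^ 2 * R ^ 2 := by nlinarith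
      have h6 : R ^ 2 * R ^ 2 * 66 ≤ R ^ 2 * R ^ 2 * (R ^ 2 * R ^ 2) := by gcongr
      nlinarith
    calc Sm V ρ (fun u => P u ^ 2) * R ^ (512 * d + 12) ≤ ((16 + 32 * R ^ 2) * (ε * (R ^ 2 * (2 * n.choose ρ)))) * R ^ (512 * d + 12) := by
          refine mul_le_mul_of_nonneg_right (hb.trans ?_) (by positivity)
          rw [hE]; gcongr
      _ = ((16 + 32 * R ^ 2) * R ^ 2 * 2) * (ε * n.choose ρ * R ^ (512 * d + 12)) := by ring
      _ ≤ R ^ 8 * (ε * n.choose ρ * R ^ (512 * d + 12)) := by gcongr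
      _ = ε * R ^ (8 + (512 * d + 12)) * n.choose ρ := by rw [pow_add R 8]; ring
      _ ≤ ε * R ^ (1000 * (d + 1)) * n.choose ρ := by
          gcongr
          · linarith
          · omega
      _ ≤ 1 * n.choose ρ := by gcongr
      _ = _ := one_mul _)
  intro u hu
  have := hz u hu
  simp only [hP] at this
  linarith
end KS

set_option linter.unusedSectionVars false
set_option linter.unusedVariables false
namespace KS
variable {ι : Type*} [DecidableEq ι]

lemma glue (U : Finset ι) (ρ : ℕ) (i : ι) (G0 : Finset ι → ℝ) (H : ι → Finset ι → ℝ)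
    (hcons : ∀ j ∈ U.erase i, ∀ l ∈ U.erase i, j ≠ l → ∀ u ∈ powersetCard ρ (((U.erase i).erase j).erase l),
      G0 (insert j u) + H j u = G0 (insert l u) + H l u) :
    ∃ G' : Finset ι → ℝ, (∀ s, i ∉ s → G' s = G0 s) ∧
      ∀ j ∈ U.erase i, ∀ t ∈ powersetCard ρ ((U.erase i).erase j), G' (insert i t) = G0 (insert j t) + H j t := by
  refine ⟨fun s => if i ∈ s then (if h : ∃ j, j ∈ U.erase i ∧ j ∉ s then
      G0 (insert h.choose (s.erase i)) + H h.choose (s.erase i) else 0) else G0 s, fun s hs => by simp [hs], ?_⟩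
  intro j hj t ht
  have ht' := ht
  rw [mem_powersetCard] at ht
  have hit : i ∉ t := fun h => by simpa using ht.1 h
  have hjt : j ∉ t := fun h => by simpa using ht.1 h
  have hji : j ≠ i := (mem_erase.1 hj).1
  have hex : ∃ j, j ∈ U.erase i ∧ j ∉ insert i t := ⟨j, hj, by simp [hji, hjt]⟩
  simp only [mem_insert_self, if_true]
  rw [dif_pos hex, erase_insert hit]
  have hs := hex.choose_spec
  set l := hex.choose
  by_cases hjl : j = l
  · rw [← hjl]
  · refine (hcons j hj l hs.1 hjl t ?_).symm
    rw [mem_powersetCard]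
    refine ⟨fun x hx => ?_, ht.2⟩
    rw [mem_erase]
    exact ⟨fun e => hs.2 (by rw [← e]; exact mem_insert_of_mem hx), ht.1 hx⟩

lemma main_step (U : Finset ι) (n ρ d : ℕ) (hU : U.card = n + 2) (hdρ : d ≤ ρ) (hdn : d + 1 + (ρ + 1) ≤ n + 2)
    (h2r : 2 * (ρ + 1) ≤ n + 2)
    (IH : ∀ i ∈ U, ClaimAt (d+1) (U.erase i) (ρ+1)) (hC : ∀ (V : Finset ι) (ρ : ℕ), ClaimAt d V ρ) :
    ClaimAt (d+1) U (ρ+1) := by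
  intro R ε F q hR hcond hsm hF hq he
  obtain ⟨h1, h2⟩ := hcond (by omega) (by omega)
  rw [hU] at he h1 h2
  push_cast at h1 h2
  have h2' : ((n:ℝ)+2) ≤ R * ((n:ℝ) + 1 - ρ) := by linarith
  have hNpos : (0:ℝ) < ((n+2).choose (ρ+1) : ℝ) := by exact_mod_cast Nat.choose_pos (by omega)
  have hε : 0 ≤ ε := by
    have : 0 ≤ ε * ((n+2).choose (ρ+1) : ℝ) := (Sm_nonneg fun _ _ => sq_nonneg _).trans he
    exact nonneg_of_mul_nonneg_left this hNpos
  have hR0 : 0 < R := by linarith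
  obtain ⟨E, hE⟩ : ∃ E, E = ε * ((n+2).choose (ρ+1) : ℝ) := ⟨_, rfl⟩
  have hE0 : 0 ≤ E := by rw [hE]; positivity
  have hr2 : 2 * ((ρ:ℝ) + 1) ≤ n + 2 := by exact_mod_cast h2r
  obtain ⟨i, hi, hei⟩ := pick_i U (ρ+1) (by omega) ε (fun s => (F s - q s) ^ 2) (by rw [hU]; exact he)
  have hcU : (U.erase i).card = n + 1 := by rw [card_erase_of_mem hi, hU]; rfl
  obtain ⟨G0, hG0, iG, eG⟩ := IH i hi R ε F q hR (by
      intro a b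
      rw [hcU] at b ⊢
      have hn : (1:ℝ) ≤ n := by exact_mod_cast (by omega : 1 ≤ n)
      push_cast
      constructor <;> nlinarith) hsm (fun s hs => hF s (mem_erase_mono hs)) hq
      (by rw [hcU]; rw [hU] at hei; exact hei)
  have eG2 : Sm (U.erase i) (ρ+1) (fun s => (F s - G0 s) ^ 2) ≤ 2 * E := by
    refine eG.trans ?_
    rw [hcU, hE]
    have : ((n+1).choose (ρ+1) : ℝ) ≤ ((n+2).choose (ρ+1) : ℝ) := by exact_mod_cast Nat.choose_le_succ _ _
    gcongr
  rw [← hE] at he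
  have hHex : ∀ j ∈ U.erase i, ∃ H ∈ PS d, IntV ((U.erase i).erase j) ρ H ∧
      Sm ((U.erase i).erase j) ρ (fun t => (F (insert i t) - F (insert j t) - H t) ^ 2) ≤ 4 * R ^ 2 * E :=
    fun j hj => get_H U n ρ d i j hi hj hU hdn R ε hR hε h1 h2' hsm (hC _ _) F q hF hq E hE he
  choose! H hHP hHI hHe using hHex
  obtain ⟨G', hG1, hG2⟩ := glue U ρ i G0 H (by
    intro j hj l hl hjl
    have h3 : ∃ n', n = n' + 1 := by
      have : ((U.erase i).erase j).card = n := by rw [card_erase_of_mem hj, hcU]; rfl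
      have h4 : 0 < ((U.erase i).erase j).card := card_pos.2 ⟨l, by rw [mem_erase]; exact ⟨hjl.symm, hl⟩⟩
      exact ⟨n - 1, by omega⟩
    obtain ⟨n', rfl⟩ := h3
    push_cast at h1 h2'
    exact consistency U n' ρ d i j l hi hj hl hjl (by omega) (by omega) R ε hR hε (by linarith) (by linarith) hsm
      F G0 (H j) (H l) hG0 (hHP j hj) (hHP l hl) iG (hHI j hj) (hHI l hl) E hE eG2 (hHe j hj) (hHe l hl))
  obtain ⟨G, hG, hGG⟩ := degree_lemma U ρ d i hi G' (by
    intro j hj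
    refine ⟨H j, hHP j hj, fun t ht => ?_⟩
    have hit : i ∉ insert j t := by
      rw [mem_powersetCard] at ht
      rw [mem_insert]
      rintro (e | h)
      · exact (mem_erase.1 hj).1 e.symm
      · simpa using ht.1 h
    rw [hG2 j hj t ht, hG1 _ hit]; ring)
  have hsplit : ∀ s ∈ powersetCard (ρ+1) U, (i ∉ s ∧ s ∈ powersetCard (ρ+1) (U.erase i)) ∨
      ∃ j ∈ U.erase i, ∃ t ∈ powersetCard ρ ((U.erase i).erase j), s = insert i t := by
    intro s hs
    rw [mem_powersetCard] at hs
    by_cases his : i ∈ s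
    · right
      have hne : (U \ s).Nonempty := by
        rw [← card_pos, card_sdiff_of_subset hs.1]; omega
      obtain ⟨j, hj⟩ := hne
      rw [mem_sdiff] at hj
      refine ⟨j, mem_erase.2 ⟨fun e => hj.2 (e ▸ his), hj.1⟩, s.erase i, ?_, (insert_erase his).symm⟩
      rw [mem_powersetCard]
      refine ⟨fun x hx => ?_, by rw [card_erase_of_mem his, hs.2]; rfl⟩
      rw [mem_erase] at hx
      rw [mem_erase, mem_erase]
      exact ⟨fun e => hj.2 (e ▸ hx.2), hx.1, hs.1 hx.2⟩
    · left
      refine ⟨his, ?_⟩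
      rw [mem_powersetCard]
      exact ⟨fun x hx => mem_erase.2 ⟨fun e => his (e ▸ hx), hs.1 hx⟩, hs.2⟩
  have hGI : IntV U (ρ+1) G := by
    intro s hs
    rw [← hGG s hs]
    rcases hsplit s hs with ⟨h, h'⟩ | ⟨j, hj, t, ht, rfl⟩
    · rw [hG1 s h]; exact iG s h'
    · rw [hG2 j hj t ht]
      obtain ⟨a, ha⟩ := iG (insert j t) (ins_mem hj ht)
      obtain ⟨b, hb⟩ := hHI j hj t ht
      exact ⟨a + b, by rw [ha, hb]; push_cast; ring⟩
  have hSm : Sm U (ρ+1) (fun s => (F s - G s) ^ 2) ≤ R ^ 5 * E := by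
    have b0 : Sm U (ρ+1) (fun s => (F s - G s) ^ 2) = Sm U (ρ+1) (fun s => (F s - G' s) ^ 2) :=
      Sm_congr fun s hs => by rw [hGG s hs]
    have b1 : Sm (U.erase i) (ρ+1) (fun s => (F s - G' s) ^ 2) = Sm (U.erase i) (ρ+1) (fun s => (F s - G0 s) ^ 2) :=
      Sm_congr fun s hs => by
        rw [mem_powersetCard] at hs
        rw [hG1 s (fun h => by simpa using hs.1 h)]
    have b2 := sum_out (U.erase i) ρ (fun t => (F (insert i t) - G' (insert i t)) ^ 2)
    have b3 : ∀ j ∈ U.erase i, Sm ((U.erase i).erase j) ρ (fun t => (F (insert i t) - G' (insert i t)) ^ 2)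
        ≤ (4 + 8 * R ^ 2) * E := by
      intro j hj
      have c1 : Sm ((U.erase i).erase j) ρ (fun t => (F (insert i t) - G' (insert i t)) ^ 2) ≤
          2 * Sm ((U.erase i).erase j) ρ (fun t => (F (insert j t) - G0 (insert j t)) ^ 2)
          + 2 * Sm ((U.erase i).erase j) ρ (fun t => (F (insert i t) - F (insert j t) - H j t) ^ 2) := by
        rw [← Sm_mul, ← Sm_mul, ← Sm_add]; apply Sm_mono; intro t ht
        rw [hG2 j hj t ht]
        nlinarith [sq_nonneg ((F (insert j t) - G0 (insert j t)) - (F (insert i t) - F (insert j t) - H j t))]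
      have c2 := Sm_ins_le (U.erase i) ρ j hj (fun s => (F s - G0 s) ^ 2) (fun _ => sq_nonneg _)
      have c3 := hHe j hj
      linarith
    have b4 := Finset.sum_le_card_nsmul _ _ _ b3
    rw [b2, nsmul_eq_mul, hcU] at b4
    push_cast at b4
    have hpos : (0:ℝ) < (n:ℝ) + 1 - ρ := by nlinarith
    have b5 : Sm (U.erase i) ρ (fun t => (F (insert i t) - G' (insert i t)) ^ 2) ≤ R * ((4 + 8 * R ^ 2) * E) := by
      refine le_of_mul_le_mul_left ?_ hpos
      refine b4.trans ?_
      have : ((n:ℝ) + 1) * ((4 + 8 * R ^ 2) * E) ≤ (R * ((n:ℝ) + 1 - ρ)) * ((4 + 8 * R ^ 2) * E) := by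
        gcongr; linarith
      linarith
    rw [b0, Sm_split hi, b1]
    have c : 2 + R * (4 + 8 * R ^ 2) ≤ R ^ 5 := by
      have q2 : 16 ≤ R ^ 2 := by nlinarith
      have q3 : 64 ≤ R ^ 3 := by nlinarith
      have : R ^ 5 = R ^ 2 * R ^ 3 := by ring
      nlinarith
    have := mul_le_mul_of_nonneg_right c hE0
    linarith
  refine ⟨G, hG, hGI, ?_⟩
  rw [hU, ← hE]
  apply bootstrap U (ρ+1) d R E F q G hR _ hF hGI hq hG he
  · rw [hU]
    calc Sm U (ρ+1) (fun s => (F s - G s) ^ 2) * R ^ (512 * d + 12) ≤ R ^ 5 * E * R ^ (512 * d + 12) := by gcongr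
      _ = ε * R ^ (5 + (512 * d + 12)) * ((n+2).choose (ρ+1) : ℝ) := by rw [hE, pow_add R 5]; ring
      _ ≤ ε * R ^ (1000 * (d + 1)) * ((n+2).choose (ρ+1) : ℝ) := by
          gcongr
          · linarith
          · omega
      _ ≤ 1 * ((n+2).choose (ρ+1) : ℝ) := by gcongr
      _ = _ := one_mul _
  · intro _ _
    rw [hU]; push_cast
    constructor <;> nlinarith

lemma claim_triv (K : ℕ) (U : Finset ι) (r : ℕ) (h : ∀ F : Finset ι → ℝ, ∃ P ∈ PS K, ∀ s ∈ powersetCard r U, F s = P s) :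
    ClaimAt K U r := by
  intro R ε F q hR _ hsm hF hq he
  obtain ⟨P, hP, hh⟩ := h F
  refine ⟨P, hP, fun s hs => by rw [← hh s hs]; exact hF s hs, ?_⟩
  have : Sm U r (fun s => (F s - P s) ^ 2) = 0 := Finset.sum_eq_zero fun s hs => by rw [hh s hs]; ring
  rw [this]
  have : 0 ≤ ε * (U.card.choose r : ℝ) := (Sm_nonneg fun _ _ => sq_nonneg _).trans he
  linarith

lemma claim_compl (K : ℕ) (U : Finset ι) (r : ℕ) (hr : r ≤ U.card) (h : ClaimAt K U (U.card - r)) :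
    ClaimAt K U r := by
  intro R ε F q hR hc hsm hF hq he
  obtain ⟨q', hq', hqq⟩ := PS_compl U K hq
  have hcast : ((U.card - r : ℕ) : ℝ) = (U.card : ℝ) - r := by rw [Nat.cast_sub hr]
  obtain ⟨G, hG, hGI, hGe⟩ := h R ε (fun s => F (U \ s)) q' hR (by
      intro a b
      obtain ⟨c1, c2⟩ := hc (by omega) (by omega)
      rw [hcast]
      exact ⟨c2, by linarith⟩) hsm (fun s hs => hF _ (compl_mem' hr hs)) hq' (by
      rw [Nat.choose_symm hr]
      refine le_trans (le_of_eq ?_) he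
      rw [← Sm_compl U r hr]
      apply Sm_congr; intro s hs
      rw [hqq s (mem_powersetCard.1 hs).1])
  obtain ⟨G2, hG2, hGG⟩ := PS_compl U K hG
  have key : ∀ s ∈ powersetCard r U, G2 s = G (U \ s) := fun s hs => (hGG s (mem_powersetCard.1 hs).1).symm
  refine ⟨G2, hG2, fun s hs => by rw [key s hs]; exact hGI _ (compl_mem hs), ?_⟩
  rw [Nat.choose_symm hr] at hGe
  refine le_trans (le_of_eq ?_) hGe
  rw [← Sm_compl U r hr]
  apply Sm_congr; intro s hs
  rw [key _ (compl_mem' hr hs), compl_compl hs]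

theorem claim (K : ℕ) : ∀ (U : Finset ι) (r : ℕ), ClaimAt K U r := by
  induction K with
  | zero =>
    intro U r R ε F q hR _ hsm hF hq he
    refine ⟨q, hq, fun s _ => ⟨0, by rw [PS_zero hq]; simp⟩, ?_⟩
    have : 0 ≤ ε * (U.card.choose r : ℝ) := (Sm_nonneg fun _ _ => sq_nonneg _).trans he
    linarith
  | succ d ihK =>
    have main : ∀ m : ℕ, ∀ U : Finset ι, U.card = m → ∀ r, ClaimAt (d+1) U r := by
      intro m
      induction m with
      | zero =>
        intro U hU r
        rcases Nat.eq_zero_or_pos r with rfl | h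
        · exact claim_triv _ _ _ (triv1 U 0 (d+1) (by omega))
        · exact claim_triv _ _ _ (triv2 U r (d+1) (by omega))
      | succ m ih =>
        have small : ∀ U : Finset ι, U.card = m + 1 → ∀ r, 2 * r ≤ m + 1 → ClaimAt (d+1) U r := by
          intro U hU r h2
          by_cases a : r < d + 1
          · exact claim_triv _ _ _ (triv1 U r (d+1) a)
          by_cases b : U.card < d + 1 + r
          · exact claim_triv _ _ _ (triv2 U r (d+1) b)
          obtain ⟨ρ, rfl⟩ : ∃ ρ, r = ρ + 1 := ⟨r - 1, by omega⟩
          obtain ⟨n, rfl⟩ : ∃ n, m = n + 1 := ⟨m - 1, by omega⟩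
          exact main_step U n ρ d hU (by omega) (by omega) h2
            (fun i hi => ih _ (by rw [card_erase_of_mem hi, hU]; rfl) _) ihK
        intro U hU r
        by_cases h2 : 2 * r ≤ m + 1
        · exact small U hU r h2
        by_cases hr : r ≤ U.card
        · exact claim_compl _ U r hr (small U hU _ (by omega))
        · exact claim_triv _ _ _ (triv2 U r (d+1) (by omega))
    exact fun U r => main _ U rfl r
end KS

set_option linter.unusedSectionVars false
set_option linter.unusedVariables false
namespace KS
variable {ι : Type*} [DecidableEq ι]

lemma comb_zero (U : Finset ι) (r : ℕ) (E : ℝ) (F q : Finset ι → ℝ)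
    (hF : ∀ s ∈ powersetCard r U, F s = 0 ∨ F s = 1) (hq : q ∈ PS 1)
    (he : Sm U r (fun s => (F s - q s) ^ 2) ≤ E) :
    ∃ G ∈ PS 1, (∀ s ∈ powersetCard r U, G s = 0 ∨ G s = 1) ∧ Sm U r (fun s => (F s - G s) ^ 2) ≤ 2 * E := by
  obtain ⟨c, rfl⟩ := PS_one hq
  have h1 : ∀ c : ℝ, Sm U r (fun s => (F s - c) ^ 2) = Sm U r F - 2 * c * Sm U r F + (U.card.choose r : ℝ) * c ^ 2 := by
    intro c
    rw [← Sm_mul, ← Sm_sub, ← Sm_const, ← Sm_add]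
    apply Sm_congr; intro s hs
    rcases hF s hs with h | h <;> rw [h] <;> ring
  rw [h1] at he
  have h0 : 0 ≤ Sm U r F := Sm_nonneg fun s hs => by rcases hF s hs with h | h <;> rw [h] <;> norm_num
  have hN : Sm U r F ≤ (U.card.choose r : ℝ) := by
    have := Sm_const U r 1
    rw [mul_one] at this
    rw [← this]
    exact Sm_mono fun s hs => by rcases hF s hs with h | h <;> rw [h] <;> norm_num
  by_cases h : 2 * Sm U r F ≤ (U.card.choose r : ℝ)
  · refine ⟨fun _ => 0, PS_const 0 0, fun _ _ => Or.inl rfl, ?_⟩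
    rw [h1 0]
    nlinarith [mul_nonneg h0 (sq_nonneg (1 - 2 * c)), mul_nonneg (sub_nonneg.2 h) (sq_nonneg c)]
  · refine ⟨fun _ => 1, PS_const 0 1, fun _ _ => Or.inr rfl, ?_⟩
    rw [h1 1]
    push Not at h
    nlinarith [mul_nonneg (sub_nonneg.2 hN) (sq_nonneg (1 - 2 * c)), mul_nonneg (sub_nonneg.2 h.le) (sq_nonneg (1 - c))]

lemma comb_main (U : Finset ι) (r k : ℕ) (hr : r ≤ U.card) (R ε : ℝ) (hR : 4 ≤ R) (F q : Finset ι → ℝ)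
    (hX : 0 < r → (U.card : ℝ) ≤ R * r ∧ (U.card : ℝ) ≤ R * ((U.card : ℝ) - r))
    (hF : ∀ s ∈ powersetCard r U, F s = 0 ∨ F s = 1) (hq : q ∈ PS (k+1))
    (hsm : ε * R ^ (1024 * (k+1)) ≤ 1)
    (he : Sm U r (fun s => (F s - q s) ^ 2) ≤ ε * (U.card.choose r : ℝ)) :
    ∃ G ∈ PS (k+1), (∀ s ∈ powersetCard r U, G s = 0 ∨ G s = 1) ∧
      Sm U r (fun s => (F s - G s) ^ 2) ≤ 2 * (ε * (U.card.choose r : ℝ)) := by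
  have hNpos : (0:ℝ) < (U.card.choose r : ℝ) := by exact_mod_cast Nat.choose_pos hr
  have hε : 0 ≤ ε :=
    nonneg_of_mul_nonneg_left ((Sm_nonneg fun _ _ => sq_nonneg _).trans he) hNpos
  have hR0 : 0 < R := by linarith
  have hFI : IntV U r F := fun s hs => by
    rcases hF s hs with h | h
    · exact ⟨0, by simp [h]⟩
    · exact ⟨1, by simp [h]⟩
  obtain ⟨G, hG, hGI, hGe⟩ := claim (k+1) U r R ε F q hR (fun a _ => hX (by omega)) (by
    refine le_trans ?_ hsm
    gcongr
    · linarith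
    · norm_num) hFI hq he
  refine ⟨G, hG, ?_, hGe⟩
  have hD : (fun s => G s * G s - G s) ∈ PS (k + k + 1) :=
    Submodule.sub_mem _ (PS_mul hG hG) (PS_mono (by omega) hG)
  obtain ⟨A, hA⟩ : ∃ A : Finset ι → Prop, ∀ s, A s ↔ F s - G s ≠ 0 := ⟨_, fun _ => Iff.rfl⟩
  have hc : Sm U r (fun s => if A s then (1:ℝ) else 0) ≤ Sm U r (fun s => (F s - G s) ^ 2) := by
    apply Sm_mono; intro s hs
    by_cases h : A s
    · simp only [h, if_true]
      apply int_sq _ ((hA s).1 h)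
      obtain ⟨a, ha⟩ := hFI s hs
      obtain ⟨b, hb⟩ := hGI s hs
      exact ⟨a - b, by rw [ha, hb]; push_cast; ring⟩
    · simp only [h, if_false]; positivity
  have h1 := AC U r (k+k) (fun s => G s * G s - G s) hD R hR (by
    intro a _
    obtain ⟨x, y⟩ := hX a
    have : (r:ℝ) ≤ U.card := by exact_mod_cast hr
    constructor <;> nlinarith [mul_nonneg hR0.le (sub_nonneg.2 this), mul_nonneg hR0.le (Nat.cast_nonneg (α := ℝ) r)]) A (by
    calc Sm U r (fun s => if A s then (1:ℝ) else 0) * R ^ (512 * (k+k) + 12)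
        ≤ (2 * (ε * (U.card.choose r : ℝ))) * R ^ (512 * (k+k) + 12) := by
          gcongr; exact hc.trans hGe
      _ = 2 * (ε * R ^ (512 * (k+k) + 12) * (U.card.choose r : ℝ)) := by ring
      _ ≤ R * (ε * R ^ (512 * (k+k) + 12) * (U.card.choose r : ℝ)) := by gcongr; linarith
      _ = ε * R ^ (512 * (k+k) + 13) * (U.card.choose r : ℝ) := by rw [pow_succ R (512 * (k+k) + 12)]; ring
      _ ≤ ε * R ^ (1024 * (k+1)) * (U.card.choose r : ℝ) := by
          gcongr
          · linarith
          · omega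
      _ ≤ 1 * (U.card.choose r : ℝ) := by gcongr
      _ = _ := one_mul _)
  have h2 : Sm U r (fun s => (G s * G s - G s) ^ 2) = Sm U r (fun s => if A s then (G s * G s - G s) ^ 2 else 0) := by
    apply Sm_congr; intro s hs
    by_cases h : A s
    · simp [h]
    · have : F s - G s = 0 := by by_contra h'; exact h ((hA s).2 h')
      simp only [h, if_false]
      have e : G s = F s := by linarith
      rw [e]
      rcases hF s hs with h | h <;> rw [h] <;> norm_num
  rw [← h2] at h1
  have h3 : Sm U r (fun s => (G s * G s - G s) ^ 2) = 0 :=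
    le_antisymm (by linarith) (Sm_nonneg fun _ _ => sq_nonneg _)
  intro s hs
  have h4 := (Finset.sum_eq_zero_iff_of_nonneg fun s _ => sq_nonneg _).1 h3 s hs
  have h5 : G s * (G s - 1) = 0 := by
    have := pow_eq_zero_iff (two_ne_zero) |>.1 h4
    linarith
  rcases mul_eq_zero.1 h5 with h | h
  · exact Or.inl h
  · exact Or.inr (by linarith)
end KS

namespace KS

/-- the set of ones of a slice point -/
def supp {n : ℕ} {p : ℝ} (x : SlicePoint n p) : Finset (Fin n) := Finset.univ.filter (fun i => x.1 i = true)

lemma andT_eq {n : ℕ} {p : ℝ} (T : Finset (Fin n)) (x : SlicePoint n p) : andT T x = AN T (supp x) := by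
  unfold andT coordR AN supp
  by_cases h : ∀ i ∈ T, x.1 i = true
  · have hs : T ⊆ Finset.univ.filter (fun i => x.1 i = true) := fun i hi => by simp [h i hi]
    rw [if_pos hs, Finset.prod_eq_one fun i hi => by simp [h i hi]]
  · have hs : ¬ T ⊆ Finset.univ.filter (fun i => x.1 i = true) := fun h' => h fun i hi => by simpa using h' hi
    rw [if_neg hs]
    push Not at h
    obtain ⟨i, hi, hh⟩ := h
    exact Finset.prod_eq_zero hi (by simp [hh])

lemma deg_to {n : ℕ} {p : ℝ} {k : ℕ} {g : SlicePoint n p → ℝ} (hg : g ∈ degLE n p k) :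
    ∃ q ∈ (PS (k+1) : Submodule ℝ (Finset (Fin n) → ℝ)), ∀ x, g x = q (supp x) := by
  unfold degLE at hg
  induction hg using Submodule.span_induction with
  | mem x hx =>
    obtain ⟨T, hT, rfl⟩ := hx
    exact ⟨AN T, AN_mem _ (by omega), fun x => andT_eq T x⟩
  | zero => exact ⟨0, Submodule.zero_mem _, fun _ => rfl⟩
  | add x y _ _ hx hy =>
    obtain ⟨P, hP, h1⟩ := hx; obtain ⟨Q, hQ, h2⟩ := hy
    exact ⟨P + Q, Submodule.add_mem _ hP hQ, fun s => by simp [h1 s, h2 s]⟩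
  | smul a x _ hx =>
    obtain ⟨P, hP, h1⟩ := hx
    exact ⟨a • P, Submodule.smul_mem _ _ hP, fun s => by simp [h1 s]⟩

lemma deg_of {n : ℕ} {p : ℝ} {k : ℕ} {q : Finset (Fin n) → ℝ} (hq : q ∈ PS (k+1)) :
    (fun x : SlicePoint n p => q (supp x)) ∈ degLE n p k := by
  unfold PS at hq
  induction hq using Submodule.span_induction with
  | mem x hx =>
    obtain ⟨T, hT, rfl⟩ := hx
    exact Submodule.subset_span ⟨T, by omega, funext fun x => (andT_eq T x).symm⟩
  | zero => exact Submodule.zero_mem _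
  | add x y _ _ hx hy => exact Submodule.add_mem _ hx hy
  | smul a x _ hx => exact Submodule.smul_mem _ a hx

/-- the slice point with a given set of ones -/
noncomputable def pt {n : ℕ} {p : ℝ} (s : Finset (Fin n)) (h : (s.card : ℝ) = p * n) : SlicePoint n p :=
  ⟨fun i => decide (i ∈ s), by
    have : (Finset.univ.filter (fun i => decide (i ∈ s) = true)) = s := by ext; simp
    rw [this]; exact h⟩

lemma supp_pt {n : ℕ} {p : ℝ} (s : Finset (Fin n)) (h : (s.card : ℝ) = p * n) : supp (pt s h) = s := by
  unfold supp pt; ext; simp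

lemma supp_inj {n : ℕ} {p : ℝ} {x y : SlicePoint n p} (h : supp x = supp y) : x = y := by
  apply Subtype.ext; funext i
  have := Finset.ext_iff.1 h i
  unfold supp at this
  simp only [Finset.mem_filter, Finset.mem_univ, true_and] at this
  exact Bool.eq_iff_iff.2 this

lemma supp_mem {n m : ℕ} {p : ℝ} (hm : (m:ℝ) = p * n) (x : SlicePoint n p) : supp x ∈ powersetCard m (univ : Finset (Fin n)) := by
  rw [mem_powersetCard]
  refine ⟨subset_univ _, ?_⟩
  have : ((supp x).card : ℝ) = m := by rw [hm]; exact x.2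
  exact_mod_cast this

lemma sum_supp {n m : ℕ} {p : ℝ} (hm : (m:ℝ) = p * n) (F : Finset (Fin n) → ℝ) :
    ∑ x : SlicePoint n p, F (supp x) = Sm univ m F := by
  unfold Sm
  refine Finset.sum_bij (fun x _ => supp x) (fun x _ => supp_mem hm x) (fun x _ y _ h => supp_inj h) ?_ (fun _ _ => rfl)
  intro s hs
  rw [mem_powersetCard] at hs
  exact ⟨pt s (by rw [hs.2, hm]), mem_univ _, supp_pt _ _⟩

lemma card_supp {n m : ℕ} {p : ℝ} (hm : (m:ℝ) = p * n) :
    (Fintype.card (SlicePoint n p) : ℝ) = (n.choose m : ℝ) := by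
  have := sum_supp hm (fun _ => 1)
  rw [Sm_const] at this
  simpa using this

end KS

/-- **Kindler–Safra theorem on the slice.** There is a universal constant `C > 0` such that:
if `0 < p ≤ 1/2`, `p n ∈ ℤ`, `f : S(n,p) → {0,1}` satisfies `‖f^{>k}‖₂² ≤ ε ≤ p^{C k}`,
then `f` is `2 ε`-close to a degree-`k` Boolean-valued function on the slice. -/
theorem kindler_safra_slice :
    ∃ C : ℝ, 0 < C ∧
      ∀ (n : ℕ) (p : ℝ), 0 < p → p ≤ 1 / 2 → (∃ m : ℤ, (m : ℝ) = p * n) →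
        ∀ (k : ℕ) (ε : ℝ) (f : SlicePoint n p → ℝ),
          (∀ x, f x = 0 ∨ f x = 1) →
          (∃ fk, IsLowProj n p k f fk ∧ sNormSq (f - fk) ≤ ε) →
          ε ≤ p ^ (C * k) →
          ∃ g : SlicePoint n p → ℝ,
            (∀ x, g x = 0 ∨ g x = 1) ∧ g ∈ degLE n p k ∧ probNe f g ≤ 2 * ε := by
  refine ⟨4096, by norm_num, ?_⟩
  rintro n p hp hp2 ⟨m', hm'⟩ k ε f hf ⟨fk, ⟨hfk, -⟩, hfe⟩ hε
  have hm0 : 0 ≤ m' := by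
    have : (0:ℝ) ≤ m' := by rw [hm']; positivity
    exact_mod_cast this
  obtain ⟨m, rfl⟩ := Int.eq_ofNat_of_zero_le hm0
  have hm : (m:ℝ) = p * n := by rw [← hm']; simp
  clear hm' hm0
  have hn0 : (0:ℝ) ≤ n := Nat.cast_nonneg n
  have hmn2 : 2 * (m:ℝ) ≤ n := by rw [hm]; nlinarith
  have hmn : m ≤ n := by
    have : (m:ℝ) ≤ n := by linarith [Nat.cast_nonneg (α := ℝ) m]
    exact_mod_cast this
  have hN : (0:ℝ) < (n.choose m : ℝ) := by exact_mod_cast Nat.choose_pos hmn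
  obtain ⟨q, hq, hqf⟩ := KS.deg_to hfk
  obtain ⟨F, hFf⟩ : ∃ F : Finset (Fin n) → ℝ, ∀ x, F (KS.supp x) = f x := by
    refine ⟨fun s => if h : (s.card : ℝ) = p * n then f (KS.pt s h) else 0, fun x => ?_⟩
    have h : ((KS.supp x).card : ℝ) = p * n := x.2
    simp only [h, dif_pos]
    congr 1
    exact KS.supp_inj (KS.supp_pt _ _)
  have hFB : ∀ s ∈ powersetCard m (univ : Finset (Fin n)), F s = 0 ∨ F s = 1 := by
    intro s hs
    rw [mem_powersetCard] at hs
    rw [← KS.supp_pt (p := p) s (by rw [hs.2, hm]), hFf]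
    exact hf _
  have he : KS.Sm univ m (fun s => (F s - q s) ^ 2) ≤ ε * (n.choose m : ℝ) := by
    unfold sNormSq sInner sExp at hfe
    rw [KS.card_supp hm, div_le_iff₀ hN] at hfe
    refine le_trans (le_of_eq ?_) hfe
    rw [← KS.sum_supp hm]
    apply Finset.sum_congr rfl; intro x _
    simp only [Pi.sub_apply]
    rw [hFf, ← hqf]; ring
  have key : ∃ G ∈ (KS.PS (k+1) : Submodule ℝ (Finset (Fin n) → ℝ)),
      (∀ s ∈ powersetCard m univ, G s = 0 ∨ G s = 1) ∧
      KS.Sm univ m (fun s => (F s - G s) ^ 2) ≤ 2 * (ε * (n.choose m : ℝ)) := by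
    rcases Nat.eq_zero_or_pos k with rfl | hk
    · exact KS.comb_zero univ m _ F q hFB hq he
    · have hcard : (univ : Finset (Fin n)).card = n := by simp
      have hinv : (2:ℝ) ≤ p⁻¹ := by
        rw [le_inv_comm₀ (by norm_num) hp]; linarith
      have := KS.comb_main univ m k (by rw [hcard]; exact hmn) (p⁻¹ ^ 2) ε (by nlinarith) F q (by
        intro hm1
        rw [hcard]
        constructor
        · have e : (n:ℝ) = p⁻¹ * m := by rw [hm]; field_simp
          rw [e]
          gcongr
          nlinarith
        · have h4 : (4:ℝ) ≤ p⁻¹ ^ 2 := by nlinarith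
          have h5 : (0:ℝ) ≤ n - m := by linarith
          nlinarith [mul_le_mul_of_nonneg_right h4 h5]) hFB hq (by
        have h1 : p ^ ((4096:ℝ) * k) = p ^ (4096 * k) := by
          rw [← Real.rpow_natCast]; push_cast; rfl
        rw [h1] at hε
        rw [← pow_mul]
        calc ε * p⁻¹ ^ (2 * (1024 * (k+1))) ≤ p ^ (4096 * k) * p⁻¹ ^ (2 * (1024 * (k+1))) := by gcongr
          _ ≤ p ^ (4096 * k) * p⁻¹ ^ (4096 * k) := by
              exact mul_le_mul_of_nonneg_left (pow_le_pow_right₀ (by linarith) (by omega)) (by positivity)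
          _ = 1 := by rw [← mul_pow, mul_inv_cancel₀ hp.ne', one_pow]) (by rw [hcard]; exact he)
      rw [hcard] at this
      exact this
  obtain ⟨G, hG, hGB, hGe⟩ := key
  refine ⟨fun x => G (KS.supp x), fun x => hGB _ (KS.supp_mem hm x), KS.deg_of hG, ?_⟩
  unfold probNe sExp
  rw [KS.card_supp hm, div_le_iff₀ hN]
  rw [← KS.sum_supp hm] at hGe
  rw [mul_assoc]
  refine le_trans ?_ hGe
  apply Finset.sum_le_sum; intro x _
  rw [hFf]
  by_cases h : f x = G (KS.supp x)
  · simp [h]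
  · simp only [h, if_false]
    rcases hf x with h1 | h1 <;> rcases hGB _ (KS.supp_mem hm x) with h2 | h2 <;> rw [h1, h2] at h ⊢ <;> simp at h ⊢
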